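/- Let h ∈ ℝ[x₁,…,xₙ] be a homogeneous polynomial hyperbolic with respect to e ∈ ℝⁿ whose hyperbolicity cone Λ_e(h) is pointed (contains no line). Then the polynomials h_k(x) := (id + (1/k)·ℓ·∂_e)^{deg h} h(x), where ℓ is any linear form that is strictly positive on Λ_e(h) \ {0}, are hyperbolic with respect to e for all sufficiently large k, every non-zero boundary point of Λ_e(h_k) is a smooth point of h_k, and h_k → h coefficientwise as k → ∞; consequently Λ_e(h) is the limit of a sequence of spectrahedral shadows Λ_e(h_k). -/

import Mathlib

open MvPolynomial

/-- The univariate polynomial `t ↦ h(a + t·v)` obtained by restricting a multivariate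
polynomial `h` to the line through `a` with direction `v`. -/
noncomputable def linePoly {n : ℕ} (h : MvPolynomial (Fin n) ℝ) (a v : Fin n → ℝ) :
    Polynomial ℝ :=
  MvPolynomial.aeval (fun i => Polynomial.C (a i) + Polynomial.C (v i) * Polynomial.X) h

/-- A real univariate polynomial has only real roots. -/
def RealRooted (q : Polynomial ℝ) : Prop :=
  ∀ z : ℂ, Polynomial.aeval z q = 0 → z.im = 0

/-- A real univariate polynomial has only non-negative real roots. -/
def NonnegRealRooted (q : Polynomial ℝ) : Prop :=
  ∀ z : ℂ, Polynomial.aeval z q = 0 → z.im = 0 ∧ 0 ≤ z.re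

/-- `h` is hyperbolic in direction `e`: `h(e) ≠ 0` and for all `a` the univariate
polynomial `t ↦ h(a - t·e)` has only real roots. -/
def IsHyperbolic {n : ℕ} (h : MvPolynomial (Fin n) ℝ) (e : Fin n → ℝ) : Prop :=
  MvPolynomial.eval e h ≠ 0 ∧ ∀ a : Fin n → ℝ, RealRooted (linePoly h a (-e))

/-- The hyperbolicity cone `Λ_e(h)`. -/
def hypCone {n : ℕ} (h : MvPolynomial (Fin n) ℝ) (e : Fin n → ℝ) : Set (Fin n → ℝ) :=
  {a | NonnegRealRooted (linePoly h a (-e))}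

/-- multiplicity (order of vanishing) of `h` at `a`: the smallest `m` such that the
degree-`m` homogeneous component of `h(x + a)` is non-zero. -/
noncomputable def multAt {n : ℕ} (h : MvPolynomial (Fin n) ℝ) (a : Fin n → ℝ) : ℕ :=
  sInf {m | MvPolynomial.homogeneousComponent m
    (MvPolynomial.aeval (fun i => MvPolynomial.X i + MvPolynomial.C (a i)) h) ≠ 0}

/-- `p` is a real-zero polynomial with respect to `e`. -/
def IsRealZero {n : ℕ} (p : MvPolynomial (Fin n) ℝ) (e : Fin n → ℝ) : Prop :=
  MvPolynomial.eval e p ≠ 0 ∧ ∀ v : Fin n → ℝ, RealRooted (linePoly p e v)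

/-- The rigidly convex set `S_e(p)` of a real-zero polynomial. -/
def rigidSet {n : ℕ} (p : MvPolynomial (Fin n) ℝ) (e : Fin n → ℝ) : Set (Fin n → ℝ) :=
  {a | ∀ t : ℝ, 0 ≤ t → t < 1 → ¬ (linePoly p e (a - e)).IsRoot t}

/-- A polynomial is strictly quasi-concave at `a` if its Hessian at `a` is negative
definite on the orthogonal complement of its gradient at `a`. -/
def StrictQuasiConcaveAt {n : ℕ} (g : MvPolynomial (Fin n) ℝ) (a : Fin n → ℝ) : Prop :=
  ∀ v : Fin n → ℝ, v ≠ 0 →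
    (∑ i, v i * MvPolynomial.eval a (MvPolynomial.pderiv i g)) = 0 →
    (∑ i, ∑ j, v i * v j *
      MvPolynomial.eval a (MvPolynomial.pderiv i (MvPolynomial.pderiv j g))) < 0

/-- A spectrahedral shadow (cone version): a linear image of
`{a : a₁M₁ + ⋯ + aₘMₘ ⪰ 0}` for real symmetric matrices `Mᵢ`. -/
def IsSpectrahedralShadowCone {n : ℕ} (S : Set (Fin n → ℝ)) : Prop :=
  ∃ (m d : ℕ) (M : Fin m → Matrix (Fin d) (Fin d) ℝ)
    (L : (Fin m → ℝ) →ₗ[ℝ] (Fin n → ℝ)),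
      (∀ i, (M i).IsSymm) ∧ S = L '' {a | (∑ i, a i • M i).PosSemidef}

/-- A spectrahedral shadow: a linear image of
`{b : M₀ + b₁M₁ + ⋯ + bₘMₘ ⪰ 0}` for real symmetric matrices `Mᵢ`. -/
def IsSpectrahedralShadow {n : ℕ} (S : Set (Fin n → ℝ)) : Prop :=
  ∃ (m d : ℕ) (M₀ : Matrix (Fin d) (Fin d) ℝ) (M : Fin m → Matrix (Fin d) (Fin d) ℝ)
    (L : (Fin m → ℝ) →ₗ[ℝ] (Fin n → ℝ)),
      M₀.IsSymm ∧ (∀ i, (M i).IsSymm) ∧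
      S = L '' {b | (M₀ + ∑ i, b i • M i).PosSemidef}

/-- A convex set is pointed if it contains no affine line. -/
def PointedSet {n : ℕ} (S : Set (Fin n → ℝ)) : Prop :=
  ¬ ∃ (a v : Fin n → ℝ), v ≠ 0 ∧ ∀ t : ℝ, a + t • v ∈ S

/-- Directional derivative `∂_e h = Σᵢ eᵢ ∂h/∂xᵢ`. -/
noncomputable def dirDeriv {n : ℕ} (e : Fin n → ℝ) (h : MvPolynomial (Fin n) ℝ) :
    MvPolynomial (Fin n) ℝ :=
  ∑ i, e i • MvPolynomial.pderiv i h

/-- Nuij's approximation sequence: `h_k = (id + (1/k)·ℓ·∂_e)^d h`. -/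
noncomputable def nuijSeq {n : ℕ} (l e : Fin n → ℝ) (d : ℕ)
    (h : MvPolynomial (Fin n) ℝ) (k : ℕ) : MvPolynomial (Fin n) ℝ :=
  (fun q => q + (1 / (k : ℝ)) •
    ((∑ i, MvPolynomial.C (l i) * MvPolynomial.X i) * dirDeriv e q))^[d] h

/-!
Each of the `d` operators `q ↦ q + ε ℓ ∂ₑq` making up `h_k` preserves hyperbolicity, enlarges the
cone without leaving the region where `ℓ` is positive, and lowers by one every multiplicity above
one at its nonzero points (Nuij), so all nonzero boundary points of `Λₑ(h_k)` are smooth. At such a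
point the form has degree at least two and its Hessian is negative definite on a hyperplane `ker s`,
so on the affine slice `s = 1` it is concave nearby, in a polarized sense, and near the point the
cone is cut out by a moment relaxation that Jensen's inequality shows to be exact. By compactness
the cone is a finite sum of such local pieces and the ray through `e`. Finally the inequality
`h(e) t^d ≤ h(a + te)` for `a` in the cone and `t ≥ 0` passes to the limit.
-/

open scoped Polynomial ComplexConjugate

section UnivariatePolynomials

theorem RealRooted.ne_zero {p : ℝ[X]} (hp : RealRooted p) : p ≠ 0 := by
  rintro rfl
  simpa using hp Complex.I

theorem RealRooted.splits {p : ℝ[X]} (hp : RealRooted p) : p.Splits := by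
  refine Polynomial.Splits.of_splits_map (algebraMap ℝ ℂ) (IsAlgClosed.splits _) fun z hz => ?_
  rw [Polynomial.mem_roots', Polynomial.IsRoot, Polynomial.eval_map_algebraMap] at hz
  exact ⟨z.re, Complex.ext rfl (by simpa using (hp z hz.2).symm)⟩

theorem RealRooted.eval_mul_eval_derivative_derivative_le {p : ℝ[X]} (hp : RealRooted p) (x : ℝ) :
    p.eval x * p.derivative.derivative.eval x ≤ p.derivative.eval x ^ 2 := by
  have hs := hp.splits
  clear hp
  induction hs using Submonoid.closure_induction with
  | one => simp
  | mem q hq => rcases hq with ⟨a, rfl⟩ | ⟨a, rfl⟩ <;> simp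
  | mul p q _ _ ihp ihq =>
    simp only [Polynomial.derivative_mul, Polynomial.derivative_add, Polynomial.eval_add,
      Polynomial.eval_mul]
    nlinarith [mul_le_mul_of_nonneg_left ihp (sq_nonneg (q.eval x)),
      mul_le_mul_of_nonneg_left ihq (sq_nonneg (p.eval x))]

theorem RealRooted.eval_derivative_nonneg {p : ℝ[X]} (hp : RealRooted p)
    (hlc : 0 ≤ p.leadingCoeff) {t : ℝ} (ht : ∀ r, p.IsRoot r → r < t) :
    0 ≤ p.derivative.eval t := by
  have hpos := Polynomial.zero_lt_eval_of_roots_lt_of_leadingCoeff_nonneg ht hlc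
  rw [hp.splits.eval_derivative_eq_eval_mul_sum hpos.ne']
  refine mul_nonneg hpos.le (Multiset.sum_nonneg fun x hx => ?_)
  obtain ⟨r, hr, rfl⟩ := Multiset.mem_map.1 hx
  exact one_div_nonneg.2 (sub_nonneg.2 (ht r (Polynomial.isRoot_of_mem_roots hr)).le)

theorem RealRooted.im_logDeriv_mul_im_nonpos {p : ℝ[X]} (hp : RealRooted p) (z : ℂ) :
    (Polynomial.aeval z p.derivative / Polynomial.aeval z p).im * z.im ≤ 0 := by
  have hs := hp.splits
  clear hp
  induction hs using Submonoid.closure_induction with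
  | one => simp
  | mem q hq =>
    rcases hq with ⟨a, rfl⟩ | ⟨a, rfl⟩
    · simp
    · have hsq : -z.im * z.im ≤ 0 := by nlinarith [mul_self_nonneg z.im]
      simpa [Complex.inv_im, div_mul_eq_mul_div] using
        div_nonpos_of_nonpos_of_nonneg hsq (Complex.normSq_nonneg (z + a))
  | mul p q _ _ ihp ihq =>
    by_cases hp0 : Polynomial.aeval z p = 0
    · simp [hp0]
    by_cases hq0 : Polynomial.aeval z q = 0
    · simp [hq0]
    have hadd : Polynomial.aeval z (p * q).derivative / Polynomial.aeval z (p * q) =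
        Polynomial.aeval z p.derivative / Polynomial.aeval z p +
          Polynomial.aeval z q.derivative / Polynomial.aeval z q := by
      rw [Polynomial.derivative_mul, map_add, map_mul, map_mul, map_mul]
      field_simp
    rw [hadd, Complex.add_im, add_mul]
    exact add_nonpos ihp ihq

/-- The one-variable form `p ↦ p + (α + βX)p'` of the operator `id + ε·ℓ·∂ₑ`: this is how that
operator acts on the restriction to a line with direction `e`, with `α`, `β` the values of `ε·ℓ` at
the base point and at `e`. -/
noncomputable def nuijPoly (α β : ℝ) (p : ℝ[X]) : ℝ[X] :=
  p + (Polynomial.C α + Polynomial.C β * Polynomial.X) * p.derivative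

theorem eval_nuijPoly (α β : ℝ) (p : ℝ[X]) (t : ℝ) :
    (nuijPoly α β p).eval t = p.eval t + (α + β * t) * p.derivative.eval t := by
  simp [nuijPoly]

theorem realRooted_nuijPoly {p : ℝ[X]} (hp : RealRooted p) (α : ℝ) {β : ℝ} (hβ : 0 < β) :
    RealRooted (nuijPoly α β p) := by
  intro z hz
  by_contra hz_im
  have hpz : Polynomial.aeval z p ≠ 0 := fun h => hz_im (hp z h)
  set w := Polynomial.aeval z p.derivative / Polynomial.aeval z p with hw
  have hzw : 1 + (α + β * z) * w = 0 := by
    simp only [nuijPoly, map_add, map_mul, Polynomial.aeval_C, Polynomial.aeval_X] at hz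
    rw [hw]; field_simp; simpa using hz
  have hw0 : w ≠ 0 := by rintro h; simp [h] at hzw
  have him : β * z.im ^ 2 * Complex.normSq w = w.im * z.im := by
    have : (α + β * z) * (Complex.normSq w : ℂ) = - conj w := by
      rw [Complex.normSq_eq_conj_mul_self]; linear_combination conj w * hzw
    have := congrArg Complex.im this
    simp only [Complex.mul_im, Complex.add_re, Complex.ofReal_re, Complex.mul_re,
      Complex.ofReal_im, zero_mul, sub_zero, mul_zero, Complex.add_im, add_zero, zero_add,
      Complex.neg_im, Complex.conj_im, neg_neg] at this
    linear_combination z.im * this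
  have := hp.im_logDeriv_mul_im_nonpos z
  have : 0 < β * z.im ^ 2 * Complex.normSq w := by have := Complex.normSq_pos.2 hw0; positivity
  linarith

theorem exists_eval_add_mul_eval_derivative_eq_zero {c s a b : ℝ} (p : ℝ[X]) (hc : 0 < c)
    (hsa : s ≤ a) (hab : a < b) (ha : a = s ∨ p.eval a = 0) (hb : p.eval b = 0) :
    ∃ t ∈ Set.Ioo a b, c * p.eval t + (t - s) * p.derivative.eval t = 0 := by
  obtain ⟨t, ht, h0⟩ := exists_hasDerivAt_eq_zero (f := fun t : ℝ => (t - s) ^ c * p.eval t)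
    (f' := fun t => c * (t - s) ^ (c - 1) * p.eval t + (t - s) ^ c * p.derivative.eval t) hab
    (((continuous_id.sub continuous_const).rpow_const fun _ => Or.inr hc.le).mul
      p.continuous).continuousOn
    (by rcases ha with rfl | ha <;> simp [*, Real.zero_rpow hc.ne'])
    (fun t ht => by
      have h := ((hasDerivAt_id t).sub_const s).rpow_const (p := c)
        (Or.inl (sub_pos.2 (hsa.trans_lt ht.1)).ne')
      exact (h.mul (p.hasDerivAt t)).congr_deriv (by simp))
  have hts : 0 < t - s := sub_pos.2 (hsa.trans_lt ht.1)
  have hfactor : (t - s) ^ (c - 1) * (c * p.eval t + (t - s) * p.derivative.eval t) = 0 := by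
    rw [← h0, ← sub_add_cancel c 1, Real.rpow_add_one hts.ne', sub_add_cancel]
    ring
  exact ⟨t, ht, (mul_eq_zero.1 hfactor).resolve_left (Real.rpow_pos_of_pos hts _).ne'⟩

theorem exists_isRoot_nuijPoly {α β a b : ℝ} (p : ℝ[X]) (hβ : 0 < β) (hαa : -α / β ≤ a)
    (hab : a < b) (ha : a = -α / β ∨ p.eval a = 0) (hb : p.eval b = 0) :
    ∃ t ∈ Set.Ioo a b, (nuijPoly α β p).eval t = 0 := by
  obtain ⟨t, ht, h0⟩ :=
    exists_eval_add_mul_eval_derivative_eq_zero p (one_div_pos.2 hβ) hαa hab ha hb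
  refine ⟨t, ht, ?_⟩
  rw [eval_nuijPoly]
  field_simp at h0
  linear_combination h0

theorem X_pow_succ_dvd_of_X_pow_dvd_nuijPoly {α β : ℝ} {p : ℝ[X]} (hα : α ≠ 0)
    (hp : p.eval 0 = 0) {k : ℕ} (hk : Polynomial.X ^ k ∣ nuijPoly α β p) :
    Polynomial.X ^ (k + 1) ∣ p := by
  induction k with
  | zero => simpa [Polynomial.X_dvd_iff, Polynomial.coeff_zero_eq_eval_zero] using hp
  | succ k ih =>
    obtain ⟨q, rfl⟩ := ih ((pow_dvd_pow _ k.le_succ).trans hk)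
    have hfactor : nuijPoly α β (Polynomial.X ^ (k + 1) * q) = Polynomial.X ^ k *
        (Polynomial.X * q + (Polynomial.C α + Polynomial.C β * Polynomial.X) *
          (Polynomial.C (k + 1 : ℝ) * q + Polynomial.X * q.derivative)) := by
      rw [nuijPoly, Polynomial.derivative_mul, Polynomial.derivative_X_pow_succ]
      simp only [map_add, map_one, map_natCast]
      ring
    rw [hfactor, pow_succ, mul_dvd_mul_iff_left (pow_ne_zero k Polynomial.X_ne_zero),
      Polynomial.X_dvd_iff, Polynomial.coeff_zero_eq_eval_zero] at hk
    have hq : q.eval 0 = 0 := by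
      simpa [hα, Nat.cast_add_one_ne_zero k] using hk
    rw [pow_succ _ (k + 1)]
    exact mul_dvd_mul_left _
      (Polynomial.X_dvd_iff.2 (by rwa [Polynomial.coeff_zero_eq_eval_zero]))

theorem RealRooted.not_X_sq_dvd_nuijPoly {p : ℝ[X]} (hp : RealRooted p) (α : ℝ) {β : ℝ}
    (hβ : 0 < β) (hp0 : p.eval 0 ≠ 0) : ¬ Polynomial.X ^ 2 ∣ nuijPoly α β p := by
  rintro ⟨q, hq⟩
  have hval : p.eval 0 + α * p.derivative.eval 0 = 0 := by
    simpa [nuijPoly] using congrArg (Polynomial.eval 0) hq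
  have hder : p.derivative.eval 0 + (β * p.derivative.eval 0 +
      α * p.derivative.derivative.eval 0) = 0 := by
    simpa [nuijPoly] using congrArg (fun r : ℝ[X] => r.derivative.eval 0) hq
  have hder_ne : p.derivative.eval 0 ≠ 0 := fun h => hp0 (by simpa [h] using hval)
  have hlaguerre := hp.eval_mul_eval_derivative_derivative_le 0
  have hβ_sq : 0 < β * p.derivative.eval 0 ^ 2 := by positivity
  have hid : p.derivative.eval 0 ^ 2 - p.eval 0 * p.derivative.derivative.eval 0 =
      -(β * p.derivative.eval 0 ^ 2) := by
    linear_combination p.derivative.eval 0 * hder - p.derivative.derivative.eval 0 * hval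
  linarith

theorem RealRooted.eval_sq_le {p : ℝ[X]} (hp : RealRooted p) (hp0 : p.eval 0 ≠ 0) (t : ℝ) :
    p.eval t ^ 2 ≤ p.eval 0 ^ 2 * (1 + t ^ 2) ^ p.natDegree *
      Real.exp ((p.derivative.eval 0 ^ 2 - p.eval 0 * p.derivative.derivative.eval 0) /
        p.eval 0 ^ 2) := by
  have hs := hp.splits
  clear hp
  induction hs using Submonoid.closure_induction with
  | one => simp
  | mem q hq =>
    rcases hq with ⟨a, rfl⟩ | ⟨a, rfl⟩
    · simp
    · have ha : a ≠ 0 := by simpa using hp0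
      have hexp : 1 + (a ^ 2)⁻¹ ≤ Real.exp ((a ^ 2)⁻¹) := by
        simpa [add_comm] using Real.add_one_le_exp ((a ^ 2)⁻¹)
      calc (Polynomial.X + Polynomial.C a).eval t ^ 2 ≤ a ^ 2 * (1 + t ^ 2) * (1 + (a ^ 2)⁻¹) := by
            have : a ^ 2 * (1 + t ^ 2) * (1 + (a ^ 2)⁻¹) = (1 + t ^ 2) * (a ^ 2 + 1) := by
              field_simp
            simp only [this, Polynomial.eval_add, Polynomial.eval_X, Polynomial.eval_C]
            nlinarith [sq_nonneg (t * a - 1)]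
        _ ≤ _ := by simpa using mul_le_mul_of_nonneg_left hexp (by positivity)
  | mul p q _ _ ihp ihq =>
    obtain ⟨hp0, hq0⟩ : p.eval 0 ≠ 0 ∧ q.eval 0 ≠ 0 := by simpa using hp0
    have hexponent : ((p * q).derivative.eval 0 ^ 2 -
        (p * q).eval 0 * (p * q).derivative.derivative.eval 0) / (p * q).eval 0 ^ 2 =
        (p.derivative.eval 0 ^ 2 - p.eval 0 * p.derivative.derivative.eval 0) / p.eval 0 ^ 2 +
        (q.derivative.eval 0 ^ 2 - q.eval 0 * q.derivative.derivative.eval 0) / q.eval 0 ^ 2 := by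
      simp only [Polynomial.derivative_mul, Polynomial.derivative_add, Polynomial.eval_add,
        Polynomial.eval_mul]
      field_simp
      ring
    rw [hexponent, Real.exp_add, Polynomial.natDegree_mul (by rintro rfl; simp at hp0)
      (by rintro rfl; simp at hq0), Polynomial.eval_mul, Polynomial.eval_mul, mul_pow]
    refine (mul_le_mul (ihp hp0) (ihq hq0) (sq_nonneg _) (by positivity)).trans_eq ?_
    ring

theorem exists_isRoot_norm_sub_lt {K : Type*} [NormedField K] [IsAlgClosed K] {p : K[X]} {z : K}
    {ρ : ℝ} (hρ : 0 ≤ ρ) (h : ‖p.eval z‖ < ‖p.leadingCoeff‖ * ρ ^ p.natDegree) :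
    ∃ r, p.IsRoot r ∧ ‖z - r‖ < ρ := by
  by_contra! hfar
  have hs := IsAlgClosed.splits p
  refine h.not_ge ?_
  rw [hs.eval_eq_prod_roots z, norm_mul, hs.natDegree_eq_card_roots]
  gcongr
  rw [← normHom_apply, map_multiset_prod, Multiset.map_map, ← Multiset.prod_replicate,
    ← Multiset.map_const']
  exact Multiset.prod_map_le_prod_map₀ _ _ (fun _ _ => hρ) fun r hr =>
    hfar r (Polynomial.isRoot_of_mem_roots hr)

theorem continuous_uncurry_eval {T : Type*} [TopologicalSpace T] {P : T → ℂ[X]} {d : ℕ}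
    (hdeg : ∀ s, (P s).natDegree = d) (hcont : ∀ j, Continuous fun s => (P s).coeff j) :
    Continuous fun x : T × ℂ => (P x.1).eval x.2 := by
  simp only [Polynomial.eval_eq_sum_range, hdeg]
  exact continuous_finsetSum _ fun j _ => ((hcont j).comp continuous_fst).mul (continuous_snd.pow j)

theorem isOpen_setOf_forall_root_im_neg {T : Type*} [TopologicalSpace T] {P : T → ℂ[X]} {d : ℕ}
    {c : ℂ} (hc : c ≠ 0) (hdeg : ∀ s, (P s).natDegree = d) (hlead : ∀ s, (P s).leadingCoeff = c)
    (hcont : ∀ j, Continuous fun s => (P s).coeff j) :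
    IsOpen {s | ∀ z, (P s).eval z = 0 → z.im < 0} := by
  rw [isOpen_iff_eventually]
  intro s₀ hs₀
  have hbound : Continuous fun s => (P s).cauchyBound := by
    simp only [Polynomial.cauchyBound, hdeg, hlead]
    exact .add (.div_const (Continuous.finset_sup_apply fun j _ => (hcont j).nnnorm) _)
      continuous_const
  set R : NNReal := (P s₀).cauchyBound + 1
  have hcompact : IsCompact (Metric.closedBall (0 : ℂ) R ∩ {z | 0 ≤ z.im}) :=
    (isCompact_closedBall _ _).inter_right (isClosed_le continuous_const Complex.continuous_im)
  have hne : ∀ᶠ s in nhds s₀, ∀ z ∈ Metric.closedBall (0 : ℂ) R ∩ {z | 0 ≤ z.im},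
      (P s).eval z ≠ 0 :=
    hcompact.eventually_forall_of_forall_eventually fun z hz =>
      (continuous_uncurry_eval hdeg hcont).continuousAt.eventually_ne
        fun h => (hs₀ z h).not_ge hz.2
  filter_upwards [hne, hbound.continuousAt.eventually_lt continuousAt_const (lt_add_one _)]
    with s hs hR z hz
  by_contra! him
  have hPs : P s ≠ 0 := by rw [← Polynomial.leadingCoeff_ne_zero, hlead]; exact hc
  have hzR : ‖z‖₊ ≤ R := ((Polynomial.IsRoot.norm_lt_cauchyBound hPs hz).trans hR).le
  exact hs z ⟨by simpa using NNReal.coe_le_coe.2 hzR, him⟩ hz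

theorem isOpen_setOf_exists_root_im_pos {T : Type*} [TopologicalSpace T] {P : T → ℂ[X]} {d : ℕ}
    {c : ℂ} (hc : c ≠ 0) (hdeg : ∀ s, (P s).natDegree = d) (hlead : ∀ s, (P s).leadingCoeff = c)
    (hcont : ∀ j, Continuous fun s => (P s).coeff j) :
    IsOpen {s | ∃ z, 0 < z.im ∧ (P s).eval z = 0} := by
  rw [isOpen_iff_eventually]
  rintro s₀ ⟨z, hz, h0⟩
  have hsmall : ∀ᶠ s in nhds s₀, ‖(P s).eval z‖ < ‖c‖ * z.im ^ d := by
    refine (((continuous_uncurry_eval hdeg hcont).comp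
      (Continuous.prodMk_left z)).norm.continuousAt).eventually_lt continuousAt_const ?_
    simp only [Function.comp_apply, h0, norm_zero]
    positivity
  filter_upwards [hsmall] with s hs
  obtain ⟨r, hr, hdist⟩ := exists_isRoot_norm_sub_lt hz.le (by rwa [hlead, hdeg])
  have := (Complex.abs_im_le_norm (z - r)).trans_lt hdist
  rw [Complex.sub_im, abs_lt] at this
  exact ⟨r, by linarith, hr⟩

theorem im_neg_of_preconnected_family {T : Type*} [TopologicalSpace T] [PreconnectedSpace T]
    {P : T → ℂ[X]} {d : ℕ} {c : ℂ} (hdeg : ∀ s, (P s).natDegree = d)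
    (hlead : ∀ s, (P s).leadingCoeff = c) (hcont : ∀ j, Continuous fun s => (P s).coeff j)
    (hreal : ∀ s (t : ℝ), (P s).eval (t : ℂ) ≠ 0) {s₀ : T}
    (h₀ : ∀ z, (P s₀).eval z = 0 → z.im < 0) (s : T) {z : ℂ} (hz : (P s).eval z = 0) :
    z.im < 0 := by
  have hc : c ≠ 0 := by
    rintro rfl
    exact hreal s₀ 0 (by simp [Polynomial.leadingCoeff_eq_zero.1 (hlead s₀)])
  refine isPreconnected_univ.subset_left_of_subset_union
    (isOpen_setOf_forall_root_im_neg hc hdeg hlead hcont)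
    (isOpen_setOf_exists_root_im_pos hc hdeg hlead hcont) ?_ ?_ ⟨s₀, Set.mem_univ s₀, h₀⟩
    (Set.mem_univ s) z hz
  · rw [Set.disjoint_left]
    rintro s hs ⟨z, hz, h0⟩
    exact (hs z h0).not_gt hz
  · intro s _
    by_contra! h
    simp only [Set.mem_union, Set.mem_ofPred_eq, not_or, not_forall, not_exists, not_and] at h
    obtain ⟨⟨z, h0, him⟩, hpos⟩ := h
    have hz : z = (z.re : ℂ) :=
      Complex.ext rfl (by simpa using ((not_lt.1 fun h => hpos z h h0).antisymm (not_lt.1 him)))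
    exact hreal s z.re (hz ▸ h0)

end UnivariatePolynomials

theorem degree_eq_of_mem_support {σ R : Type*} [CommSemiring R] {g : MvPolynomial σ R} {d : ℕ}
    (hg : g.IsHomogeneous d) {m : σ →₀ ℕ} (hm : m ∈ g.support) : m.degree = d := by
  rw [Finsupp.degree_eq_weight_one]
  exact hg (mem_support_iff.1 hm)

theorem eval_smul_of_isHomogeneous {σ R : Type*} [CommSemiring R] {g : MvPolynomial σ R} {d : ℕ}
    (hg : g.IsHomogeneous d) (c : R) (x : σ → R) : eval (c • x) g = c ^ d * eval x g := by
  simp only [MvPolynomial.eval_eq, Finset.mul_sum]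
  refine Finset.sum_congr rfl fun m hm => ?_
  simp only [Pi.smul_apply, smul_eq_mul, mul_pow, Finset.prod_mul_distrib,
    Finset.prod_pow_eq_pow_sum, ← degree_eq_of_mem_support hg hm, Finsupp.degree_apply]
  ring

section LinearForms

variable {σ K : Type*} [Fintype σ] [Field K]

/-- The linear form `∑ i, y i * X i` with coefficient vector `y`, as a linear function of `y`. -/
noncomputable def linearForm : (σ → K) →ₗ[K] MvPolynomial σ K :=
  Fintype.linearCombination K X

theorem linearForm_apply (y : σ → K) : linearForm y = ∑ i, C (y i) * X i := by
  simp [linearForm, Fintype.linearCombination_apply, smul_eq_C_mul]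

theorem eval_linearForm (x y : σ → K) : eval x (linearForm y) = ∑ i, y i * x i := by
  simp [linearForm_apply]

theorem isHomogeneous_linearForm (y : σ → K) : (linearForm y).IsHomogeneous 1 := by
  rw [linearForm_apply]
  exact .sum _ _ _ fun i _ => by
    simpa using (isHomogeneous_C σ (y i)).mul (isHomogeneous_X K i)

theorem coeff_linearForm_pow (y : σ → K) {m : σ →₀ ℕ} {d : ℕ} (hm : m.degree = d) :
    coeff m (linearForm y ^ d) = m.multinomial * m.prod fun i k => y i ^ k := by
  have hy : linearForm y = (Finsupp.equivFunOnFinite.symm y).linearCombination K X := by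
    rw [Finsupp.linearCombination_apply, Finsupp.sum_fintype _ _ (by simp)]
    simp [linearForm, Fintype.linearCombination_apply]
  rw [hy, coeff_linearCombination_X_pow, if_pos (by rwa [Finsupp.degree] at hm)]
  rfl

/-- The polarization of a form `g`, as a linear functional on polynomials: for `g` homogeneous of
degree `d`, the symmetric `d`-linear form with diagonal `g` is
`(y₁, …, y_d) ↦ polar g (linearForm y₁ * ⋯ * linearForm y_d)`. It is the apolar (Bombieri) pairing
with `g`, whence the multinomial weights. -/
noncomputable def polar (g : MvPolynomial σ K) : MvPolynomial σ K →ₗ[K] K :=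
  ∑ m ∈ g.support, (coeff m g / m.multinomial) • lcoeff K m

theorem continuous_prod_linearForm [TopologicalSpace K] [IsTopologicalRing K] {κ : Type*}
    [Fintype κ] (Φ : MvPolynomial σ K →ₗ[K] K) :
    Continuous fun y : κ → σ → K => Φ (∏ k, linearForm (y k)) := by
  classical
  simp only [linearForm_apply, Finset.prod_univ_sum, map_sum]
  simp only [← smul_eq_C_mul, Finset.prod_smul, map_smul, smul_eq_mul]
  fun_prop

theorem polar_linearForm_pow [CharZero K] {d : ℕ} {g : MvPolynomial σ K} (hg : g.IsHomogeneous d)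
    (y : σ → K) : polar g (linearForm y ^ d) = eval y g := by
  simp only [polar, LinearMap.sum_apply, LinearMap.smul_apply, lcoeff_apply, smul_eq_mul,
    MvPolynomial.eval_eq]
  refine Finset.sum_congr rfl fun m hm => ?_
  have hmult : (m.multinomial : K) ≠ 0 := by
    rw [Finsupp.multinomial_eq]
    exact_mod_cast (Nat.multinomial_pos _ _).ne'
  rw [coeff_linearForm_pow y (degree_eq_of_mem_support hg hm)]
  field_simp
  rfl

end LinearForms

section RestrictLine

variable {σ R : Type*} [CommRing R]

/-- The univariate polynomial `t ↦ g (a + t • v)`, over any commutative ring; over `ℝ` this is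
`linePoly`, and complex coefficients are needed to move lines off the real points. -/
noncomputable def restrictLine (g : MvPolynomial σ R) (a v : σ → R) : Polynomial R :=
  aeval (fun i => Polynomial.C (a i) + Polynomial.C (v i) * Polynomial.X) g

theorem eval_restrictLine (g : MvPolynomial σ R) (a v : σ → R) (t : R) :
    (restrictLine g a v).eval t = eval (a + t • v) g := by
  rw [restrictLine, MvPolynomial.aeval_def, ← Polynomial.coe_evalRingHom, hom_eval₂]
  change _ = eval₂ (RingHom.id R) _ g
  congr 1
  · ext r
    simp
  · ext i
    simp only [Polynomial.coe_evalRingHom, Polynomial.eval_add,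
      Polynomial.eval_mul, Polynomial.eval_C, Polynomial.eval_X, Pi.add_apply, Pi.smul_apply,
      smul_eq_mul, mul_comm t]

theorem map_restrictLine {S : Type*} [CommRing S] (φ : R →+* S) (g : MvPolynomial σ R)
    (a v : σ → R) : (restrictLine g a v).map φ = restrictLine (map φ g) (φ ∘ a) (φ ∘ v) := by
  rw [restrictLine, MvPolynomial.aeval_def, ← Polynomial.coe_mapRingHom, hom_eval₂, restrictLine,
    MvPolynomial.aeval_def, eval₂_map]
  congr 1
  · ext r
    simp
  · ext i
    simp

theorem continuous_coeff_restrictLine [TopologicalSpace R] [IsTopologicalRing R]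
    (g : MvPolynomial σ R) (v : σ → R) (j : ℕ) :
    Continuous fun a => (restrictLine g a v).coeff j := by
  induction g using MvPolynomial.induction_on generalizing j with
  | C r => simpa [restrictLine] using continuous_const
  | add p q hp hq =>
    simp only [restrictLine, map_add, Polynomial.coeff_add] at hp hq ⊢
    exact (hp j).add (hq j)
  | mul_X p i hp =>
    simp only [restrictLine, map_mul, aeval_X, Polynomial.coeff_mul, Polynomial.coeff_add,
      Polynomial.coeff_C] at hp ⊢
    refine continuous_finsetSum _ fun x _ => (hp x.1).mul (.add ?_ continuous_const)
    split_ifs <;> fun_prop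

end RestrictLine

section PolarExpansion

variable {σ K : Type*} [Field K] [CharZero K] {d : ℕ} {g : MvPolynomial σ K}

theorem restrictLine_eq_sum_polar [Fintype σ] (hg : g.IsHomogeneous d) (a v : σ → K) :
    restrictLine g a v = ∑ j ∈ Finset.range (d + 1), Polynomial.monomial j
      (d.choose j * polar g (linearForm a ^ (d - j) * linearForm v ^ j)) := by
  refine Polynomial.funext fun t => ?_
  rw [eval_restrictLine, ← polar_linearForm_pow hg, map_add, map_smul, add_comm, add_pow, map_sum,
    Polynomial.eval_finsetSum]
  refine Finset.sum_congr rfl fun j _ => ?_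
  have hterm : (t • linearForm v) ^ j * linearForm a ^ (d - j) * (d.choose j : MvPolynomial σ K) =
      (t ^ j * d.choose j : K) • (linearForm a ^ (d - j) * linearForm v ^ j) := by
    simp only [smul_eq_C_mul, map_mul, map_pow, map_natCast]
    ring
  rw [hterm, map_smul, smul_eq_mul, Polynomial.eval_monomial]
  ring

theorem natDegree_restrictLine_le [Finite σ] (hg : g.IsHomogeneous d) (a v : σ → K) :
    (restrictLine g a v).natDegree ≤ d := by
  have := Fintype.ofFinite σ
  rw [restrictLine_eq_sum_polar hg]
  exact Polynomial.natDegree_sum_le_of_forall_le _ _ fun j hj =>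
    (Polynomial.natDegree_monomial_le _).trans (Finset.mem_range_succ_iff.1 hj)

theorem coeff_restrictLine [Fintype σ] (hg : g.IsHomogeneous d) (a v : σ → K) {j : ℕ} (hj : j ≤ d) :
    (restrictLine g a v).coeff j =
      d.choose j * polar g (linearForm a ^ (d - j) * linearForm v ^ j) := by
  simp [restrictLine_eq_sum_polar hg, Polynomial.coeff_monomial, hj]

theorem coeff_restrictLine_self [Finite σ] (hg : g.IsHomogeneous d) (a v : σ → K) :
    (restrictLine g a v).coeff d = eval v g := by
  have := Fintype.ofFinite σ
  simp [coeff_restrictLine hg a v le_rfl, polar_linearForm_pow hg]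

theorem natDegree_restrictLine [Finite σ] (hg : g.IsHomogeneous d) (a : σ → K) {v : σ → K}
    (hv : eval v g ≠ 0) : (restrictLine g a v).natDegree = d :=
  (natDegree_restrictLine_le hg a v).antisymm
    (Polynomial.le_natDegree_of_ne_zero (by rwa [coeff_restrictLine_self hg]))

theorem leadingCoeff_restrictLine [Finite σ] (hg : g.IsHomogeneous d) (a : σ → K) {v : σ → K}
    (hv : eval v g ≠ 0) : (restrictLine g a v).leadingCoeff = eval v g := by
  rw [Polynomial.leadingCoeff, natDegree_restrictLine hg a hv, coeff_restrictLine_self hg]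

end PolarExpansion

section DirectionalDerivative

variable {n : ℕ}

theorem linePoly_eq_restrictLine (g : MvPolynomial (Fin n) ℝ) (a v : Fin n → ℝ) :
    linePoly g a v = restrictLine g a v :=
  rfl

theorem eval_linePoly (g : MvPolynomial (Fin n) ℝ) (a v : Fin n → ℝ) (t : ℝ) :
    (linePoly g a v).eval t = eval (a + t • v) g :=
  eval_restrictLine g a v t

theorem dirDeriv_eq_mkDerivation (e : Fin n → ℝ) (g : MvPolynomial (Fin n) ℝ) :
    dirDeriv e g = mkDerivation ℝ (fun i => C (e i)) g := by
  induction g using MvPolynomial.induction_on with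
  | C r => simp [dirDeriv]
  | add p q hp hq =>
    simp only [dirDeriv, map_add, smul_add, Finset.sum_add_distrib] at hp hq ⊢
    rw [hp, hq]
  | mul_X p j hp =>
    simp only [dirDeriv, Derivation.leibniz, mkDerivation_X, smul_add, Finset.sum_add_distrib,
      smul_comm (_ : ℝ) (_ : MvPolynomial (Fin n) ℝ), ← Finset.smul_sum] at hp ⊢
    rw [hp]
    simp [pderiv_X, Pi.single_apply, smul_eq_C_mul]

theorem linePoly_dirDeriv (g : MvPolynomial (Fin n) ℝ) (a e : Fin n → ℝ) :
    linePoly (dirDeriv e g) a e = (linePoly g a e).derivative := by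
  simp only [dirDeriv_eq_mkDerivation, linePoly]
  induction g using MvPolynomial.induction_on with
  | C r => simp
  | add p q hp hq => simp only [map_add, hp, hq]
  | mul_X p i hp =>
    simp only [Derivation.leibniz, mkDerivation_X, smul_eq_mul, map_add, map_mul, hp, aeval_X,
      aeval_C, Polynomial.derivative_mul, Polynomial.derivative_C, Polynomial.derivative_X,
      ← Polynomial.C_eq_algebraMap]
    ring

theorem linePoly_linearForm (l a v : Fin n → ℝ) :
    linePoly (linearForm l) a v = Polynomial.C (eval a (linearForm l)) +
      Polynomial.C (eval v (linearForm l)) * Polynomial.X := by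
  refine Polynomial.funext fun t => ?_
  simp only [eval_linePoly, eval_linearForm, Pi.add_apply, Pi.smul_apply, smul_eq_mul, mul_add,
    Finset.sum_add_distrib, Polynomial.eval_add, Polynomial.eval_mul, Polynomial.eval_C,
    Polynomial.eval_X, Finset.sum_mul]
  exact congrArg _ (Finset.sum_congr rfl fun i _ => by ring)

theorem coeff_one_linePoly (g : MvPolynomial (Fin n) ℝ) (a v : Fin n → ℝ) :
    (linePoly g a v).coeff 1 = eval a (dirDeriv v g) := by
  have h := congrArg (Polynomial.eval 0) (linePoly_dirDeriv g a v)
  rw [eval_linePoly, zero_smul, add_zero, ← Polynomial.coeff_zero_eq_eval_zero,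
    Polynomial.coeff_derivative] at h
  simpa using h.symm

theorem isHomogeneous_dirDeriv {d : ℕ} {g : MvPolynomial (Fin n) ℝ} (hg : g.IsHomogeneous d)
    (e : Fin n → ℝ) : (dirDeriv e g).IsHomogeneous (d - 1) :=
  .sum _ _ _ fun i _ => by
    simpa [smul_eq_C_mul] using (isHomogeneous_C (Fin n) (e i)).mul (hg.pderiv (i := i))

theorem coeff_aeval_C_mul_X (g : MvPolynomial (Fin n) ℝ) (e : Fin n → ℝ) (m : ℕ) :
    (aeval (fun i => Polynomial.C (e i) * Polynomial.X) g : Polynomial ℝ).coeff m =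
      eval e (homogeneousComponent m g) := by
  induction g using MvPolynomial.induction_on' with
  | add p q hp hq => simp only [map_add, Polynomial.coeff_add, hp, hq]
  | monomial s c =>
    have hline : (aeval (fun i => Polynomial.C (e i) * Polynomial.X) (monomial s c) :
        Polynomial ℝ) = Polynomial.C (eval e (monomial s c)) * Polynomial.X ^ s.degree := by
      simp only [aeval_monomial, eval_monomial, Finsupp.prod, Finsupp.degree_apply, mul_pow,
        Finset.prod_mul_distrib, Finset.prod_pow_eq_pow_sum, map_mul, map_prod, map_pow,
        Polynomial.algebraMap_eq, mul_assoc]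
    rw [hline, Polynomial.coeff_C_mul_X_pow, homogeneousComponent_of_mem
      (isHomogeneous_monomial c rfl)]
    split_ifs <;> simp

theorem coeff_linePoly (g : MvPolynomial (Fin n) ℝ) (a e : Fin n → ℝ) (m : ℕ) :
    (linePoly g a e).coeff m =
      eval e (homogeneousComponent m (aeval (fun i => X i + C (a i)) g)) := by
  rw [← coeff_aeval_C_mul_X, ← AlgHom.comp_apply, comp_aeval, linePoly]
  congr 2
  ext i
  simp [add_comm]

end DirectionalDerivative

section HyperbolicForms

variable {n d : ℕ} {g : MvPolynomial (Fin n) ℝ} {a b e : Fin n → ℝ}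

theorem aeval_linePoly (g : MvPolynomial (Fin n) ℝ) (a v : Fin n → ℝ) (z : ℂ) :
    Polynomial.aeval z (linePoly g a v) =
      eval (Complex.ofRealHom ∘ a + z • Complex.ofRealHom ∘ v) (map Complex.ofRealHom g) := by
  rw [← eval_restrictLine, ← map_restrictLine, Polynomial.eval_map, linePoly_eq_restrictLine,
    Polynomial.aeval_def]
  rfl

theorem aeval_linePoly_neg (g : MvPolynomial (Fin n) ℝ) (a v : Fin n → ℝ) (z : ℂ) :
    Polynomial.aeval z (linePoly g a (-v)) = Polynomial.aeval (-z) (linePoly g a v) := by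
  rw [aeval_linePoly, aeval_linePoly]
  congr 2
  ext i
  simp

theorem aeval_linePoly_swap (hg : g.IsHomogeneous d) (a v : Fin n → ℝ) {z : ℂ} (hz : z ≠ 0) :
    Polynomial.aeval z (linePoly g a v) = z ^ d * Polynomial.aeval z⁻¹ (linePoly g v a) := by
  rw [aeval_linePoly, aeval_linePoly, ← eval_smul_of_isHomogeneous (hg.map _), smul_add,
    smul_inv_smul₀ hz, add_comm]

theorem leadingCoeff_mul_pow_le_eval {p : Polynomial ℝ} (hp : p.Splits) (hlc : 0 ≤ p.leadingCoeff)
    (hroots : ∀ r ∈ p.roots, r ≤ 0) {t : ℝ} (ht : 0 ≤ t) :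
    p.leadingCoeff * t ^ p.natDegree ≤ p.eval t := by
  rw [hp.eval_eq_prod_roots, hp.natDegree_eq_card_roots]
  refine mul_le_mul_of_nonneg_left ?_ hlc
  clear hp hlc
  generalize p.roots = roots at hroots
  induction roots using Multiset.induction_on with
  | empty => simp
  | cons r s ih =>
    simp only [Multiset.card_cons, Multiset.map_cons, Multiset.prod_cons, pow_succ']
    have hr : t ≤ t - r := by linarith [hroots r (Multiset.mem_cons_self r s)]
    exact mul_le_mul hr (ih fun q hq => hroots q (Multiset.mem_cons_of_mem hq)) (by positivity)
      (ht.trans hr)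

/-- A form of degree `d`, positive at `e`, all of whose restrictions to lines in direction `e` are
real-rooted: a hyperbolic form with its sign normalized by `0 < g e`. -/
structure IsHyperbolicForm (d : ℕ) (g : MvPolynomial (Fin n) ℝ) (e : Fin n → ℝ) : Prop where
  isHomogeneous : g.IsHomogeneous d
  eval_pos : 0 < eval e g
  realRooted : ∀ a, RealRooted (linePoly g a e)

theorem IsHyperbolic.isHyperbolicForm (H : IsHyperbolic g e) (hg : g.IsHomogeneous d)
    (hpos : 0 < eval e g) : IsHyperbolicForm d g e :=
  ⟨hg, hpos, fun a z hz => by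
    simpa using H.2 a (-z) (by rwa [aeval_linePoly_neg, neg_neg])⟩

/-- The component of `e` in the complement of the zero set of a hyperbolic form `g`, described by
positivity of `g` on the segment towards `e`; it is the interior of the hyperbolicity cone. -/
def openCone (g : MvPolynomial (Fin n) ℝ) (e : Fin n → ℝ) : Set (Fin n → ℝ) :=
  {a | ∀ x ∈ segment ℝ a e, 0 < eval x g}

theorem mem_openCone_comm : a ∈ openCone g b ↔ b ∈ openCone g a := by
  simp only [openCone, Set.mem_ofPred_eq, segment_symm ℝ a b]

theorem isOpen_openCone (g : MvPolynomial (Fin n) ℝ) (e : Fin n → ℝ) : IsOpen (openCone g e) := by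
  rw [isOpen_iff_eventually]
  intro a ha
  simp only [openCone, segment_eq_image, Set.forall_mem_image, Set.mem_ofPred_eq] at ha ⊢
  refine isCompact_Icc.eventually_forall_of_forall_eventually fun τ hτ => ?_
  have hc : Continuous fun z : (Fin n → ℝ) × ℝ => eval ((1 - z.2) • z.1 + z.2 • e) g :=
    (continuous_eval g).comp (by fun_prop)
  exact hc.continuousAt.eventually (lt_mem_nhds (ha hτ))

namespace IsHyperbolicForm

theorem isHyperbolic (H : IsHyperbolicForm d g e) : IsHyperbolic g e :=
  ⟨H.eval_pos.ne', fun a z hz => by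
    simpa using H.realRooted a _ ((aeval_linePoly_neg g a e z).symm.trans hz)⟩

theorem natDegree_linePoly (H : IsHyperbolicForm d g e) (a : Fin n → ℝ) :
    (linePoly g a e).natDegree = d :=
  natDegree_restrictLine H.isHomogeneous a H.eval_pos.ne'

theorem leadingCoeff_linePoly (H : IsHyperbolicForm d g e) (a : Fin n → ℝ) :
    (linePoly g a e).leadingCoeff = eval e g :=
  leadingCoeff_restrictLine H.isHomogeneous a H.eval_pos.ne'

theorem mul_pow_le_eval (H : IsHyperbolicForm d g e) (ha : a ∈ hypCone g e) {t : ℝ} (ht : 0 ≤ t) :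
    eval e g * t ^ d ≤ eval (a + t • e) g := by
  rw [← eval_linePoly, ← H.leadingCoeff_linePoly a, ← H.natDegree_linePoly a]
  refine leadingCoeff_mul_pow_le_eval (H.realRooted a).splits ?_ (fun r hr => ?_) ht
  · exact (H.leadingCoeff_linePoly a).symm ▸ H.eval_pos.le
  · have hroot : Polynomial.aeval (r : ℂ) (linePoly g a e) = 0 := by
      rw [← Complex.coe_algebraMap, Polynomial.aeval_algebraMap_apply_eq_algebraMap_eval,
        Polynomial.isRoot_of_mem_roots hr, map_zero]
    simpa using (ha (-r) (by rwa [aeval_linePoly_neg, neg_neg])).2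

theorem exists_pos_root_of_notMem (H : IsHyperbolicForm d g e) (ha : a ∉ hypCone g e) :
    ∃ r, 0 < r ∧ (linePoly g a e).eval r = 0 := by
  by_contra! hroot
  refine ha fun z hz => ?_
  rw [aeval_linePoly_neg] at hz
  have him : z.im = 0 := by simpa using H.realRooted a _ hz
  refine ⟨him, not_lt.1 fun hre => hroot (-z.re) (neg_pos.2 hre) ?_⟩
  have hzr : -z = ((-z.re : ℝ) : ℂ) := Complex.ext (by simp) (by simp [him])
  rw [hzr, ← Complex.coe_algebraMap, Polynomial.aeval_algebraMap_apply_eq_algebraMap_eval] at hz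
  simpa using hz

theorem mem_hypCone_iff (H : IsHyperbolicForm d g e) :
    a ∈ hypCone g e ↔ ∀ t : ℝ, 0 < t → 0 < eval (a + t • e) g := by
  refine ⟨fun ha t ht => lt_of_lt_of_le (mul_pos H.eval_pos (pow_pos ht d))
    (H.mul_pow_le_eval ha ht.le), fun ha => by_contra fun hmem => ?_⟩
  obtain ⟨t, ht, hroot⟩ := H.exists_pos_root_of_notMem hmem
  rw [eval_linePoly] at hroot
  exact (ha t ht).ne' hroot

theorem eval_nonneg (H : IsHyperbolicForm d g e) (ha : a ∈ hypCone g e) : 0 ≤ eval a g := by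
  have h := H.mul_pow_le_eval ha le_rfl
  rw [zero_smul, add_zero] at h
  exact (mul_nonneg H.eval_pos.le (by positivity)).trans h

theorem isClosed_hypCone (H : IsHyperbolicForm d g e) : IsClosed (hypCone g e) := by
  have h : hypCone g e = ⋂ t ∈ Set.Ioi (0 : ℝ), {a | eval e g * t ^ d ≤ eval (a + t • e) g} := by
    ext a
    simp only [Set.mem_iInter, Set.mem_ofPred_eq]
    exact ⟨fun ha t ht => H.mul_pow_le_eval ha (le_of_lt ht), fun ha => H.mem_hypCone_iff.2
      fun t ht => lt_of_lt_of_le (mul_pos H.eval_pos (pow_pos ht d)) (ha t ht)⟩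
  rw [h]
  exact isClosed_biInter fun t _ =>
    isClosed_le continuous_const ((continuous_eval g).comp (by fun_prop))

theorem add_smul_mem (H : IsHyperbolicForm d g e) (ha : a ∈ hypCone g e) {t : ℝ} (ht : 0 ≤ t) :
    a + t • e ∈ hypCone g e :=
  H.mem_hypCone_iff.2 fun s hs => by
    simpa [add_smul, add_assoc] using H.mem_hypCone_iff.1 ha (t + s) (by positivity)

theorem zero_mem (H : IsHyperbolicForm d g e) : (0 : Fin n → ℝ) ∈ hypCone g e :=
  H.mem_hypCone_iff.2 fun t ht => by
    rw [zero_add, eval_smul_of_isHomogeneous H.isHomogeneous]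
    exact mul_pos (pow_pos ht d) H.eval_pos

theorem smul_mem (H : IsHyperbolicForm d g e) (ha : a ∈ hypCone g e) {c : ℝ} (hc : 0 ≤ c) :
    c • a ∈ hypCone g e := by
  rcases hc.eq_or_lt with rfl | hc
  · exact (zero_smul ℝ a).symm ▸ H.zero_mem
  refine H.mem_hypCone_iff.2 fun t ht => ?_
  rw [show t • e = c • ((t / c) • e) by rw [smul_smul, mul_div_cancel₀ _ hc.ne'], ← smul_add,
    eval_smul_of_isHomogeneous H.isHomogeneous]
  exact mul_pos (pow_pos hc d) (H.mem_hypCone_iff.1 ha _ (by positivity))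

theorem mem_openCone_iff (H : IsHyperbolicForm d g e) :
    a ∈ openCone g e ↔ a ∈ hypCone g e ∧ 0 < eval a g := by
  refine ⟨fun h => ⟨H.mem_hypCone_iff.2 fun t ht => ?_, h a (left_mem_segment ℝ a e)⟩, ?_⟩
  · have hseg : (1 + t)⁻¹ • (a + t • e) ∈ segment ℝ a e :=
      ⟨(1 + t)⁻¹, (1 + t)⁻¹ * t, by positivity, by positivity, by field_simp, by module⟩
    have := h _ hseg
    rw [eval_smul_of_isHomogeneous H.isHomogeneous] at this
    exact pos_of_mul_pos_right this (by positivity)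
  · rintro ⟨hmem, hpos⟩ x ⟨α, β, hα, hβ, hαβ, rfl⟩
    rcases hα.eq_or_lt with rfl | hα
    · simpa [show β = 1 by linarith] using H.eval_pos
    have hx : α • a + β • e = α • (a + (β / α) • e) := by
      rw [smul_add, smul_smul, mul_div_cancel₀ _ hα.ne']
    rw [hx, eval_smul_of_isHomogeneous H.isHomogeneous]
    refine mul_pos (pow_pos hα d) ?_
    rcases hβ.eq_or_lt with rfl | hβ
    · simpa using hpos
    · exact H.mem_hypCone_iff.1 hmem _ (by positivity)

theorem add_smul_mem_openCone (H : IsHyperbolicForm d g e) (ha : a ∈ hypCone g e) {t : ℝ}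
    (ht : 0 < t) : a + t • e ∈ openCone g e :=
  H.mem_openCone_iff.2 ⟨H.add_smul_mem ha ht.le, H.mem_hypCone_iff.1 ha t ht⟩

theorem mem_and_eval_eq_zero_of_mem_frontier (H : IsHyperbolicForm d g e)
    (ha : a ∈ frontier (hypCone g e)) : a ∈ hypCone g e ∧ eval a g = 0 := by
  rw [H.isClosed_hypCone.frontier_eq] at ha
  refine ⟨ha.1, le_antisymm (not_lt.1 fun hpos => ha.2 ?_) (H.eval_nonneg ha.1)⟩
  exact interior_maximal (fun x hx => (H.mem_openCone_iff.1 hx).1) (isOpen_openCone g e)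
    (H.mem_openCone_iff.2 ⟨ha.1, hpos⟩)

theorem mem_openCone_of_segment (H : IsHyperbolicForm d g e) (ha : a ∈ openCone g e)
    (hpos : ∀ x ∈ segment ℝ a b, 0 < eval x g) : b ∈ openCone g e := by
  refine (convex_segment a b).isPreconnected.subset_left_of_subset_union
    (isOpen_openCone g e) H.isClosed_hypCone.isOpen_compl ?_ (fun x hx => ?_)
    ⟨a, left_mem_segment ℝ a b, ha⟩ (right_mem_segment ℝ a b)
  · exact Set.disjoint_left.2 fun x hx hx' => hx' (H.mem_openCone_iff.1 hx).1
  · exact or_iff_not_imp_right.2 fun hmem =>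
      H.mem_openCone_iff.2 ⟨not_not.1 hmem, hpos x hx⟩

theorem im_eq_zero_and_re_neg_of_aeval_linePoly (H : IsHyperbolicForm d g e)
    (ha : a ∈ openCone g e) {w : ℂ} (hw : Polynomial.aeval w (linePoly g e a) = 0) :
    w.im = 0 ∧ w.re < 0 := by
  have hw0 : w ≠ 0 := by
    rintro rfl
    rw [← Polynomial.coeff_zero_eq_aeval_zero', Polynomial.coeff_zero_eq_eval_zero,
      eval_linePoly] at hw
    exact H.eval_pos.ne' (by simpa using hw)
  rw [aeval_linePoly_swap H.isHomogeneous e a hw0, mul_eq_zero_iff_left (pow_ne_zero d hw0)] at hw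
  have him : w.im = 0 := by simpa [hw0] using H.realRooted a _ hw
  have hre : 0 ≤ (-w⁻¹).re :=
    ((H.mem_openCone_iff.1 ha).1 (-w⁻¹) (by rwa [aeval_linePoly_neg, neg_neg])).2
  refine ⟨him, lt_of_le_of_ne (not_lt.1 fun hpos => ?_) fun h0 => hw0 (Complex.ext h0 him)⟩
  rw [Complex.neg_re, Complex.inv_re, neg_nonneg] at hre
  exact absurd hre (not_le.2 (div_pos hpos (Complex.normSq_pos.2 hw0)))

theorem eval_ofReal_ne_zero (H : IsHyperbolicForm d g e) (ha : a ∈ openCone g e) :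
    eval (Complex.ofRealHom ∘ a) (map Complex.ofRealHom g) ≠ 0 := by
  rw [← map_eval]
  exact Complex.ofReal_ne_zero.2 (H.mem_openCone_iff.1 ha).2.ne'

-- Deform `x` to `0` along real multiples: `t` never becomes real on the way, because `g` has no
-- zero with imaginary part `δ • e`, and for `x = 0` the roots are known explicitly.
theorem im_neg_of_eval_eq_zero (H : IsHyperbolicForm d g e) (ha : a ∈ openCone g e)
    (x : Fin n → ℝ) {δ : ℝ} (hδ : 0 < δ) {t : ℂ}
    (ht : (restrictLine (map Complex.ofRealHom g)
      (Complex.ofRealHom ∘ x + (δ * Complex.I) • Complex.ofRealHom ∘ e)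
      (Complex.ofRealHom ∘ a)).eval t = 0) : t.im < 0 := by
  have hg := H.isHomogeneous.map Complex.ofRealHom
  have hga := H.eval_ofReal_ne_zero ha
  let P : ℝ → Polynomial ℂ := fun s => restrictLine (map Complex.ofRealHom g)
    (Complex.ofRealHom ∘ (s • x) + (δ * Complex.I) • Complex.ofRealHom ∘ e) (Complex.ofRealHom ∘ a)
  refine im_neg_of_preconnected_family (P := P) (fun s => natDegree_restrictLine hg _ hga)
    (fun s => leadingCoeff_restrictLine hg _ hga) (fun j => ?_) (fun s t h0 => ?_) (s₀ := 0)
    (fun z hz => ?_) 1 (by simpa [P] using ht)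
  · have := Complex.continuous_ofReal
    exact (continuous_coeff_restrictLine _ _ j).comp (by
      simp only [Function.comp_def, Pi.smul_apply, Complex.ofRealHom_eq_coe]
      fun_prop)
  · have himag := H.realRooted (s • x + t • a) (δ * Complex.I) (by
      rw [← h0, aeval_linePoly, eval_restrictLine]
      congr 2
      ext i
      simp
      ring)
    exact hδ.ne' (by simpa using himag)
  · have hδI : (δ * Complex.I : ℂ) ≠ 0 := by simp [hδ.ne']
    obtain ⟨him, hre⟩ := H.im_eq_zero_and_re_neg_of_aeval_linePoly ha
      (w := z / (δ * Complex.I)) (by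
        rw [aeval_linePoly, ← mul_eq_zero_iff_left (pow_ne_zero d hδI),
          ← eval_smul_of_isHomogeneous hg, smul_add, smul_smul, mul_div_cancel₀ z hδI, ← hz,
          eval_restrictLine]
        congr 2
        ext i
        simp)
    have hz' : z = (z / (δ * Complex.I)) * (δ * Complex.I) := (div_mul_cancel₀ z hδI).symm
    rw [hz']
    simpa [Complex.mul_im, him] using mul_neg_of_neg_of_pos hre hδ

theorem im_nonpos_of_aeval_linePoly_eq_zero (H : IsHyperbolicForm d g e) (ha : a ∈ openCone g e)
    (x : Fin n → ℝ) {t : ℂ} (h0 : Polynomial.aeval t (linePoly g x a) = 0) : t.im ≤ 0 := by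
  by_contra! ht
  have hg := H.isHomogeneous.map Complex.ofRealHom
  have hga := H.eval_ofReal_ne_zero ha
  let P : ℝ → Polynomial ℂ := fun δ => restrictLine (map Complex.ofRealHom g)
    (Complex.ofRealHom ∘ x + (δ * Complex.I) • Complex.ofRealHom ∘ e) (Complex.ofRealHom ∘ a)
  have hc : Continuous fun δ => ‖(P δ).eval t‖ := by
    have := Complex.continuous_ofReal
    simp only [P, eval_restrictLine]
    exact ((continuous_eval _).comp (by fun_prop)).norm
  have hlim : ∀ᶠ δ in nhdsWithin (0 : ℝ) (Set.Ioi 0),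
      ‖(P δ).eval t‖ < ‖(P δ).leadingCoeff‖ * t.im ^ (P δ).natDegree := by
    refine nhdsWithin_le_nhds ?_
    simp only [P, leadingCoeff_restrictLine hg _ hga, natDegree_restrictLine hg _ hga]
    refine hc.continuousAt.eventually (gt_mem_nhds ?_)
    have hP0 : (P 0).eval t = 0 := by
      rw [← h0, aeval_linePoly, eval_restrictLine]
      simp
    simp only [hP0, norm_zero]
    positivity
  obtain ⟨δ, hδt, hδ⟩ := (hlim.and self_mem_nhdsWithin).exists
  obtain ⟨r, hr, htr⟩ := exists_isRoot_norm_sub_lt ht.le hδt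
  have hr_neg : r.im < 0 := H.im_neg_of_eval_eq_zero ha x hδ hr
  have := (abs_lt.1 ((Complex.abs_im_le_norm (t - r)).trans_lt htr)).2
  rw [Complex.sub_im] at this
  linarith

theorem of_mem_openCone (H : IsHyperbolicForm d g e) (ha : a ∈ openCone g e) :
    IsHyperbolicForm d g a := by
  refine ⟨H.isHomogeneous, (H.mem_openCone_iff.1 ha).2, fun x t h0 => ?_⟩
  have hconj := H.im_nonpos_of_aeval_linePoly_eq_zero ha x (t := starRingEnd ℂ t) (by
    rw [Polynomial.aeval_conj, h0, map_zero])
  rw [Complex.conj_im, neg_nonpos] at hconj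
  exact le_antisymm (H.im_nonpos_of_aeval_linePoly_eq_zero ha x h0) hconj

theorem convex_openCone (H : IsHyperbolicForm d g e) : Convex ℝ (openCone g e) := by
  refine convex_iff_segment_subset.2 fun a ha b hb c hc => ?_
  have hba : b ∈ openCone g a :=
    (H.of_mem_openCone ha).mem_openCone_of_segment (mem_openCone_comm.1 ha) fun x hx =>
      hb x (segment_symm ℝ e b ▸ hx)
  refine H.mem_openCone_of_segment ha fun x hx => hba x ?_
  exact segment_symm ℝ b a ▸ (convex_segment a b).segment_subset (left_mem_segment ℝ a b) hc hx

theorem add_mem (H : IsHyperbolicForm d g e) (ha : a ∈ hypCone g e) (hb : b ∈ hypCone g e) :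
    a + b ∈ hypCone g e := by
  refine H.mem_hypCone_iff.2 fun t ht => ?_
  have hmid := H.convex_openCone (H.add_smul_mem_openCone ha (half_pos ht))
    (H.add_smul_mem_openCone hb (half_pos ht)) one_half_pos.le one_half_pos.le (by norm_num)
  have hsum : a + b + t • e = (2 : ℝ) • ((1 / 2 : ℝ) • (a + (t / 2) • e) +
      (1 / 2 : ℝ) • (b + (t / 2) • e)) := by
    module
  rw [hsum, eval_smul_of_isHomogeneous H.isHomogeneous]
  exact mul_pos (by positivity) (H.mem_openCone_iff.1 hmid).2

theorem realRooted_of_mem_openCone (H : IsHyperbolicForm d g e) (ha : a ∈ openCone g e)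
    (w : Fin n → ℝ) : RealRooted (linePoly g a w) := by
  intro z hz
  by_cases hz0 : z = 0
  · simp [hz0]
  rw [aeval_linePoly_swap H.isHomogeneous a w hz0, mul_eq_zero_iff_left (pow_ne_zero d hz0)] at hz
  simpa [hz0] using (H.of_mem_openCone ha).realRooted w _ hz

theorem self_mem (H : IsHyperbolicForm d g e) : e ∈ hypCone g e := by
  simpa using H.add_smul_mem H.zero_mem zero_le_one

theorem eval_zero (H : IsHyperbolicForm d g e) (hd : d ≠ 0) : eval 0 g = 0 := by
  simpa [hd] using eval_smul_of_isHomogeneous H.isHomogeneous 0 0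

theorem ne_zero (H : IsHyperbolicForm d g e) (hd : d ≠ 0) : e ≠ 0 := by
  rintro rfl
  exact H.eval_pos.ne' (H.eval_zero hd)

theorem eval_derivative_linePoly_nonneg (H : IsHyperbolicForm d g e) (ha : a ∈ hypCone g e) {t : ℝ}
    (ht : 0 < t) : 0 ≤ (linePoly g a e).derivative.eval t := by
  refine (H.realRooted a).eval_derivative_nonneg
    ((H.leadingCoeff_linePoly a).symm ▸ H.eval_pos.le) fun r hr => not_le.1 fun htr => ?_
  rw [Polynomial.IsRoot, eval_linePoly] at hr
  exact (H.mem_hypCone_iff.1 ha r (ht.trans_le htr)).ne' hr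

end IsHyperbolicForm

end HyperbolicForms

section NuijOperator

variable {n d : ℕ} {g : MvPolynomial (Fin n) ℝ} {l e : Fin n → ℝ} {ε : ℝ}

/-- The operator `ℓ ∂_e` on polynomials, where `ℓ = linearForm l`. -/
noncomputable def nuijOperator (l e : Fin n → ℝ) : Module.End ℝ (MvPolynomial (Fin n) ℝ) :=
  LinearMap.mulLeft ℝ (linearForm l) ∘ₗ (mkDerivation ℝ fun i => C (e i)).toLinearMap

/-- The operator `id + ε ℓ ∂_e` of Nuij, where `ℓ = linearForm l`. -/
noncomputable def nuijStep (l e : Fin n → ℝ) (ε : ℝ) : Module.End ℝ (MvPolynomial (Fin n) ℝ) :=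
  1 + ε • nuijOperator l e

theorem nuijStep_apply (l e : Fin n → ℝ) (ε : ℝ) (g : MvPolynomial (Fin n) ℝ) :
    nuijStep l e ε g = g + ε • (linearForm l * dirDeriv e g) := by
  rw [dirDeriv_eq_mkDerivation]
  rfl

theorem nuijStep_zero (l e : Fin n → ℝ) : nuijStep l e 0 = 1 := by
  rw [nuijStep, zero_smul, add_zero]

theorem nuijSeq_eq_nuijStep_pow (l e : Fin n → ℝ) (d : ℕ) (h : MvPolynomial (Fin n) ℝ) (k : ℕ) :
    nuijSeq l e d h k = (nuijStep l e (1 / k) ^ d) h := by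
  rw [Module.End.coe_pow, nuijSeq]
  congr 1
  ext1 q
  rw [nuijStep_apply, linearForm_apply]

theorem nuijStep_pow_apply (l e : Fin n → ℝ) (ε : ℝ) (d : ℕ) (g : MvPolynomial (Fin n) ℝ) :
    (nuijStep l e ε ^ d) g = ∑ m ∈ Finset.range (d + 1),
      (ε ^ m * d.choose m) • (nuijOperator l e ^ m) g := by
  rw [nuijStep, add_comm, (Commute.one_right _).add_pow, LinearMap.sum_apply]
  refine Finset.sum_congr rfl fun m _ => ?_
  rw [one_pow, mul_one, smul_pow, ← nsmul_eq_mul', LinearMap.smul_apply, LinearMap.smul_apply,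
    mul_smul, smul_comm, ← Nat.cast_smul_eq_nsmul ℝ]

theorem continuous_coeff_nuijStep_pow (l e : Fin n → ℝ) (d : ℕ) (g : MvPolynomial (Fin n) ℝ)
    (m : Fin n →₀ ℕ) : Continuous fun ε : ℝ => coeff m ((nuijStep l e ε ^ d) g) := by
  simp only [nuijStep_pow_apply, coeff_sum, coeff_smul]
  fun_prop

theorem continuous_eval_nuijStep_pow (l e : Fin n → ℝ) (d : ℕ) (g : MvPolynomial (Fin n) ℝ) :
    Continuous fun z : ℝ × (Fin n → ℝ) => eval z.2 ((nuijStep l e z.1 ^ d) g) := by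
  simp only [nuijStep_pow_apply, map_sum, smul_eval]
  exact continuous_finsetSum _ fun m _ =>
    Continuous.mul (by fun_prop) ((continuous_eval _).comp continuous_snd)

theorem linePoly_nuijStep (l e : Fin n → ℝ) (ε : ℝ) (g : MvPolynomial (Fin n) ℝ)
    (a : Fin n → ℝ) : linePoly (nuijStep l e ε g) a e =
      nuijPoly (ε * eval a (linearForm l)) (ε * eval e (linearForm l)) (linePoly g a e) := by
  refine Polynomial.funext fun t => ?_
  have hderiv := congrArg (Polynomial.eval t) (linePoly_dirDeriv g a e)
  have hform := congrArg (Polynomial.eval t) (linePoly_linearForm l a e)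
  rw [eval_linePoly] at hderiv hform
  simp only [eval_linePoly, eval_nuijPoly, nuijStep_apply, map_add, smul_eval, map_mul, hform,
    hderiv, Polynomial.eval_add, Polynomial.eval_mul, Polynomial.eval_C, Polynomial.eval_X]
  ring

theorem isHomogeneous_nuijStep (hg : g.IsHomogeneous d) (hd : d ≠ 0) (l e : Fin n → ℝ) (ε : ℝ) :
    (nuijStep l e ε g).IsHomogeneous d := by
  have h := (isHomogeneous_linearForm l).mul (isHomogeneous_dirDeriv hg e)
  rw [Nat.add_sub_cancel' (Nat.one_le_iff_ne_zero.2 hd)] at h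
  have hsmul := (isHomogeneous_C (Fin n) ε).mul h
  rw [zero_add] at hsmul
  rw [nuijStep_apply, smul_eq_C_mul]
  exact hg.add hsmul

end NuijOperator

section NuijIteration

variable {n d N : ℕ} {g : MvPolynomial (Fin n) ℝ} {l e a : Fin n → ℝ} {ε : ℝ}

/-- The invariant of Nuij's iteration: a hyperbolic form of positive degree, for which `ℓ` is
positive at the nonzero points of the cone and `N` bounds the multiplicity of `g` at these points,
measured along direction `e`. Stage `1` means that the nonzero boundary points are smooth. -/
structure IsNuijStage (l e : Fin n → ℝ) (d N : ℕ) (g : MvPolynomial (Fin n) ℝ) : Prop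
    extends IsHyperbolicForm d g e where
  degree_ne_zero : d ≠ 0
  linearForm_pos : ∀ a ∈ hypCone g e, a ≠ 0 → 0 < eval a (linearForm l)
  order_le : ∀ a ∈ hypCone g e, a ≠ 0 → ∀ k, Polynomial.X ^ k ∣ linePoly g a e → k ≤ N

theorem IsHyperbolicForm.isNuijStage (H : IsHyperbolicForm d g e) (hd : d ≠ 0)
    (hl : ∀ a ∈ hypCone g e, a ≠ 0 → 0 < eval a (linearForm l)) : IsNuijStage l e d d g := by
  refine ⟨H, hd, hl, fun a _ _ k hk => ?_⟩
  have hne : linePoly g a e ≠ 0 := by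
    rw [← Polynomial.leadingCoeff_ne_zero, H.leadingCoeff_linePoly]
    exact H.eval_pos.ne'
  simpa [H.natDegree_linePoly] using Polynomial.natDegree_le_of_dvd hk hne

namespace IsNuijStage

theorem linearForm_dir_pos (S : IsNuijStage l e d N g) : 0 < eval e (linearForm l) :=
  S.linearForm_pos e S.self_mem (S.ne_zero S.degree_ne_zero)

theorem linearForm_nonneg (S : IsNuijStage l e d N g) (ha : a ∈ hypCone g e) :
    0 ≤ eval a (linearForm l) := by
  rcases eq_or_ne a 0 with rfl | ha0
  · rw [eval_linearForm]
    simp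
  · exact (S.linearForm_pos a ha ha0).le

theorem isHyperbolicForm_nuijStep (S : IsNuijStage l e d N g) (hε : 0 < ε) :
    IsHyperbolicForm d (nuijStep l e ε g) e := by
  refine ⟨isHomogeneous_nuijStep S.isHomogeneous S.degree_ne_zero l e ε, ?_, fun a => ?_⟩
  · have hstep := congrArg (Polynomial.eval 1) (linePoly_nuijStep l e ε g 0)
    rw [eval_nuijPoly, eval_linePoly, eval_linePoly, one_smul, zero_add] at hstep
    rw [hstep]
    have hderiv := S.eval_derivative_linePoly_nonneg S.zero_mem one_pos
    have hform := S.linearForm_dir_pos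
    have := S.eval_pos
    simp only [eval_linearForm, Pi.zero_apply, mul_zero, Finset.sum_const_zero] at hform ⊢
    positivity
  · rw [linePoly_nuijStep]
    exact realRooted_nuijPoly (S.realRooted a) _ (mul_pos hε S.linearForm_dir_pos)

theorem hypCone_subset_nuijStep (S : IsNuijStage l e d N g) (hε : 0 < ε) :
    hypCone g e ⊆ hypCone (nuijStep l e ε g) e := by
  refine fun a ha => (S.isHyperbolicForm_nuijStep hε).mem_hypCone_iff.2 fun t ht => ?_
  rw [← eval_linePoly, linePoly_nuijStep, eval_nuijPoly, eval_linePoly]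
  have hpos := S.mem_hypCone_iff.1 ha t ht
  have hderiv := S.eval_derivative_linePoly_nonneg ha ht
  have hform := S.linearForm_nonneg ha
  have hform_e := S.linearForm_dir_pos
  positivity

theorem eval_nuijPoly_ne_zero (S : IsNuijStage l e d N g) (hε : 0 < ε)
    (ha : a ∈ hypCone (nuijStep l e ε g) e) {t : ℝ} (ht : 0 < t) :
    (nuijPoly (ε * eval a (linearForm l)) (ε * eval e (linearForm l)) (linePoly g a e)).eval t ≠
      0 := by
  rw [← linePoly_nuijStep, eval_linePoly]
  exact ((S.isHyperbolicForm_nuijStep hε).mem_hypCone_iff.1 ha t ht).ne'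

-- If `ℓ a ≤ 0`, follow the line `a + t e` to the point where `ℓ` vanishes. That point is not in the
-- cone of `g`, so `g` has a zero further out, and Rolle's theorem yields a zero of the new form.
theorem linearForm_pos_of_mem_nuijStep (S : IsNuijStage l e d N g) (hε : 0 < ε)
    (ha : a ∈ hypCone (nuijStep l e ε g) e) (ha0 : a ≠ 0) : 0 < eval a (linearForm l) := by
  by_contra! hle
  have hβ := mul_pos hε S.linearForm_dir_pos
  set s := -(ε * eval a (linearForm l)) / (ε * eval e (linearForm l)) with hs
  have hs0 : 0 ≤ s := div_nonneg (by nlinarith) hβ.le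
  have hform : eval (a + s • e) (linearForm l) = 0 := by
    have hline := congrArg (Polynomial.eval s) (linePoly_linearForm l a e)
    rw [eval_linePoly] at hline
    have := hε.ne'
    have := S.linearForm_dir_pos.ne'
    rw [hline]
    simp only [hs, Polynomial.eval_add, Polynomial.eval_mul, Polynomial.eval_C, Polynomial.eval_X]
    field_simp
    ring
  by_cases hm : a + s • e ∈ hypCone g e
  · have hzero : a + s • e = 0 := by
      by_contra hne
      exact (S.linearForm_pos _ hm hne).ne' hform
    rcases hs0.eq_or_lt with h | h
    · exact ha0 (by simpa [← h] using hzero)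
    · have H := S.isHyperbolicForm_nuijStep hε
      have hpos := H.mem_hypCone_iff.1 ha s h
      rw [hzero, H.eval_zero S.degree_ne_zero] at hpos
      exact hpos.false
  · obtain ⟨r, hr, hroot⟩ := S.exists_pos_root_of_notMem hm
    obtain ⟨t, ht, h0⟩ := exists_isRoot_nuijPoly (linePoly g a e) hβ le_rfl
      (lt_add_of_pos_right s hr) (Or.inl rfl)
      (by rwa [eval_linePoly, add_smul, ← add_assoc, ← eval_linePoly])
    exact S.eval_nuijPoly_ne_zero hε ha (hs0.trans_lt ht.1) h0

theorem order_le_of_mem_nuijStep (S : IsNuijStage l e d N g) (hε : 0 < ε)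
    (ha : a ∈ hypCone (nuijStep l e ε g) e) (ha0 : a ≠ 0) {k : ℕ}
    (hk : Polynomial.X ^ k ∣ linePoly (nuijStep l e ε g) a e) : k ≤ max 1 (N - 1) := by
  by_contra! hlt
  rw [linePoly_nuijStep] at hk
  have hα := mul_pos hε (S.linearForm_pos_of_mem_nuijStep hε ha ha0)
  have hβ := mul_pos hε S.linearForm_dir_pos
  by_cases h0 : (linePoly g a e).eval 0 = 0
  · by_cases hm : a ∈ hypCone g e
    · have := S.order_le a hm ha0 (k + 1)
        (X_pow_succ_dvd_of_X_pow_dvd_nuijPoly hα.ne' h0 hk)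
      omega
    · obtain ⟨r, hr, hroot⟩ := S.exists_pos_root_of_notMem hm
      obtain ⟨t, ht, hzero⟩ := exists_isRoot_nuijPoly (linePoly g a e) hβ
        (div_nonpos_of_nonpos_of_nonneg (neg_nonpos.2 hα.le) hβ.le) hr (Or.inr h0) hroot
      exact S.eval_nuijPoly_ne_zero hε ha ht.1 hzero
  · exact (S.realRooted a).not_X_sq_dvd_nuijPoly _ hβ h0
      ((pow_dvd_pow _ (by omega)).trans hk)

theorem nuijStep (S : IsNuijStage l e d N g) (hε : 0 < ε) :
    IsNuijStage l e d (max 1 (N - 1)) (nuijStep l e ε g) :=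
  ⟨S.isHyperbolicForm_nuijStep hε, S.degree_ne_zero,
    fun _ ha ha0 => S.linearForm_pos_of_mem_nuijStep hε ha ha0,
    fun _ ha ha0 _ hk => S.order_le_of_mem_nuijStep hε ha ha0 hk⟩

theorem nuijStep_pow (S : IsNuijStage l e d (max 1 N) g) (hε : 0 < ε) (j : ℕ) :
    IsNuijStage l e d (max 1 (N - j)) ((_root_.nuijStep l e ε ^ j) g) ∧
      hypCone g e ⊆ hypCone ((_root_.nuijStep l e ε ^ j) g) e := by
  induction j with
  | zero => exact ⟨S, subset_rfl⟩
  | succ j ih =>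
    rw [pow_succ', Module.End.mul_apply]
    refine ⟨?_, ih.2.trans (ih.1.hypCone_subset_nuijStep hε)⟩
    rw [show max 1 (N - (j + 1)) = max 1 (max 1 (N - j) - 1) by omega]
    exact ih.1.nuijStep hε

theorem eval_dirDeriv_pos (S : IsNuijStage l e d 1 g) (ha : a ∈ hypCone g e) (ha0 : a ≠ 0)
    (h0 : eval a g = 0) : 0 < eval a (dirDeriv e g) := by
  refine lt_of_le_of_ne ?_ fun hzero => ?_
  · have hlim := ((linePoly g a e).derivative.continuous.tendsto 0).mono_left
      (nhdsWithin_le_nhds (s := Set.Ioi 0))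
    rw [← linePoly_dirDeriv, eval_linePoly, zero_smul, add_zero, linePoly_dirDeriv] at hlim
    refine ge_of_tendsto hlim ?_
    filter_upwards [self_mem_nhdsWithin] with t ht
    exact S.eval_derivative_linePoly_nonneg ha ht
  · have hdvd : Polynomial.X ^ 2 ∣ linePoly g a e := by
      refine Polynomial.X_pow_dvd_iff.2 fun m hm => ?_
      interval_cases m
      · simpa [Polynomial.coeff_zero_eq_eval_zero, eval_linePoly] using h0
      · rw [coeff_one_linePoly, ← hzero]
    exact absurd (S.order_le a ha ha0 2 hdvd) (by norm_num)

end IsNuijStage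

theorem multAt_eq_one {v : Fin n → ℝ} (h0 : eval a g = 0) (h1 : eval a (dirDeriv v g) ≠ 0) :
    multAt g a = 1 := by
  have hcoeff0 : (linePoly g a v).coeff 0 = 0 := by
    simpa [Polynomial.coeff_zero_eq_eval_zero, eval_linePoly] using h0
  rw [← coeff_one_linePoly, coeff_linePoly] at h1
  rw [coeff_linePoly, homogeneousComponent_zero, eval_C] at hcoeff0
  have hmem : homogeneousComponent 1 (aeval (fun i => X i + C (a i)) g) ≠ 0 := fun h =>
    h1 (by rw [h, map_zero])
  refine le_antisymm (Nat.sInf_le hmem) (le_csInf ⟨1, hmem⟩ fun m hm => ?_)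
  rw [Nat.one_le_iff_ne_zero]
  rintro rfl
  exact hm (by rw [homogeneousComponent_zero, hcoeff0, C_0])

end NuijIteration

open scoped Topology

section BoundaryGeometry

variable {n d N : ℕ} {g : MvPolynomial (Fin n) ℝ} {l e u w : Fin n → ℝ}

theorem IsHyperbolicForm.eventually_mem_hypCone (H : IsHyperbolicForm d g e)
    (hu : u ∈ hypCone g e) (hD : 0 < eval u (dirDeriv e g)) :
    ∀ᶠ x in 𝓝 u, 0 ≤ eval x g → x ∈ hypCone g e := by
  have hderiv : ∀ᶠ z : (Fin n → ℝ) × ℝ in 𝓝 (u, 0), 0 < eval (z.1 + z.2 • e) (dirDeriv e g) := by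
    have hc : Continuous fun z : (Fin n → ℝ) × ℝ => eval (z.1 + z.2 • e) (dirDeriv e g) :=
      (continuous_eval _).comp (by fun_prop)
    exact hc.continuousAt.eventually (lt_mem_nhds (by simpa using hD))
  rw [nhds_prod_eq, Filter.eventually_prod_iff] at hderiv
  obtain ⟨U, hU, V, hV, hUV⟩ := hderiv
  obtain ⟨T, hT, hball⟩ := Metric.eventually_nhds_iff.1 hV
  have hopen : ∀ᶠ x in 𝓝 u, x + (T / 2) • e ∈ openCone g e := by
    have hc : Continuous fun x : Fin n → ℝ => x + (T / 2) • e := by fun_prop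
    exact hc.continuousAt.eventually
      ((isOpen_openCone g e).mem_nhds (H.add_smul_mem_openCone hu (half_pos hT)))
  filter_upwards [hU, hopen] with x hxU hx h0
  refine H.mem_hypCone_iff.2 fun t ht => ?_
  rcases le_or_gt t (T / 2) with h | h
  · have hmono : StrictMonoOn (fun t => (linePoly g x e).eval t) (Set.Icc 0 (T / 2)) := by
      refine strictMonoOn_of_deriv_pos (convex_Icc _ _) (Polynomial.continuous _).continuousOn
        fun s hs => ?_
      rw [interior_Icc] at hs
      rw [Polynomial.deriv, ← linePoly_dirDeriv, eval_linePoly]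
      refine hUV hxU (hball ?_)
      rw [Real.dist_eq, sub_zero, abs_of_pos hs.1]
      linarith [hs.2]
    have hlt := hmono ⟨le_rfl, (half_pos hT).le⟩ ⟨ht.le, h⟩ ht
    simp only [eval_linePoly, zero_smul, add_zero] at hlt
    exact h0.trans_lt hlt
  · have hpos := H.mem_hypCone_iff.1 (H.mem_openCone_iff.1 hx).1 (t - T / 2) (sub_pos.2 h)
    rwa [add_assoc, ← add_smul, add_sub_cancel] at hpos

theorem eval_add_smul_eq_divX_linePoly (g : MvPolynomial (Fin n) ℝ) (a v : Fin n → ℝ) (t : ℝ) :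
    eval (a + t • v) g = t * (linePoly g a v).divX.eval t + eval a g := by
  have h := congrArg (Polynomial.eval t) (Polynomial.divX_mul_X_add (linePoly g a v))
  simp only [Polynomial.eval_add, Polynomial.eval_mul, Polynomial.eval_X, Polynomial.eval_C,
    Polynomial.coeff_zero_eq_eval_zero, eval_linePoly, zero_smul, add_zero] at h
  rw [← h, mul_comm]

theorem eval_zero_divX_linePoly (g : MvPolynomial (Fin n) ℝ) (a v : Fin n → ℝ) :
    (linePoly g a v).divX.eval 0 = eval a (dirDeriv v g) := by
  rw [← Polynomial.coeff_zero_eq_eval_zero, Polynomial.coeff_divX, zero_add, coeff_one_linePoly]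

namespace IsHyperbolicForm

theorem eval_sq_le_of_mem_openCone (H : IsHyperbolicForm d g e) {x : Fin n → ℝ}
    (hx : x ∈ openCone g e) (w : Fin n → ℝ) (t : ℝ) :
    eval (x + t • w) g ^ 2 ≤ eval x g ^ 2 * (1 + t ^ 2) ^ d * Real.exp
      ((eval x (dirDeriv w g) ^ 2 - eval x g * eval x (dirDeriv w (dirDeriv w g))) /
        eval x g ^ 2) := by
  have hlag := (H.realRooted_of_mem_openCone hx w).eval_sq_le (by
    simpa [eval_linePoly] using (H.mem_openCone_iff.1 hx).2.ne') t
  simp only [← linePoly_dirDeriv, eval_linePoly, zero_smul, add_zero] at hlag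
  refine hlag.trans ?_
  gcongr
  · nlinarith [sq_nonneg t]
  · exact linePoly_eq_restrictLine g x w ▸ natDegree_restrictLine_le H.isHomogeneous _ _

-- With `x = u + ε e`, the exponent in the bound for `g (x + t w) ^ 2` stays bounded as `ε` tends
-- to `0`, while the prefactor `g x ^ 2` tends to `0`.
theorem linePoly_eq_zero (H : IsHyperbolicForm d g e) (hu : u ∈ hypCone g e)
    (h0 : eval u g = 0) (hD : 0 < eval u (dirDeriv e g)) (h1 : eval u (dirDeriv w g) = 0)
    (h2 : 0 ≤ eval u (dirDeriv w (dirDeriv w g))) : linePoly g u w = 0 := by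
  set P := (linePoly g u e).divX
  set Q := (linePoly (dirDeriv w g) u e).divX
  set R := (linePoly (dirDeriv w (dirDeriv w g)) u e).divX
  have hP0 : 0 < P.eval 0 := hD.trans_eq (eval_zero_divX_linePoly g u e).symm
  have hPpos : ∀ᶠ ε in 𝓝[>] (0 : ℝ), 0 < P.eval ε :=
    ((P.continuous.tendsto 0).mono_left nhdsWithin_le_nhds).eventually (lt_mem_nhds hP0)
  refine Polynomial.funext fun t => ?_
  rw [eval_linePoly, Polynomial.eval_zero]
  have hbound : ∀ᶠ ε in 𝓝[>] (0 : ℝ), eval (u + ε • e + t • w) g ^ 2 ≤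
      (ε * P.eval ε) ^ 2 * (1 + t ^ 2) ^ d *
        Real.exp ((Q.eval ε ^ 2 - P.eval ε * R.eval ε) / P.eval ε ^ 2) := by
    filter_upwards [self_mem_nhdsWithin, hPpos] with ε hε hPε
    have hε : 0 < ε := hε
    have h := H.eval_sq_le_of_mem_openCone (H.add_smul_mem_openCone hu hε) w t
    simp only [eval_add_smul_eq_divX_linePoly _ u e, h0, h1, add_zero] at h
    refine h.trans (mul_le_mul_of_nonneg_left (Real.exp_le_exp.2 ?_) (by positivity))
    rw [div_le_div_iff₀ (by positivity) (by positivity)]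
    have : 0 ≤ ε * P.eval ε ^ 3 * eval u (dirDeriv w (dirDeriv w g)) := by positivity
    linear_combination this
  have hlim : Filter.Tendsto (fun ε : ℝ => (ε * P.eval ε) ^ 2 * (1 + t ^ 2) ^ d *
      Real.exp ((Q.eval ε ^ 2 - P.eval ε * R.eval ε) / P.eval ε ^ 2)) (𝓝[>] 0) (𝓝 0) := by
    have hc : ContinuousAt (fun ε : ℝ => (ε * P.eval ε) ^ 2 * (1 + t ^ 2) ^ d *
        Real.exp ((Q.eval ε ^ 2 - P.eval ε * R.eval ε) / P.eval ε ^ 2)) 0 := by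
      fun_prop (disch := positivity)
    simpa using hc.tendsto.mono_left nhdsWithin_le_nhds
  have hsq : Filter.Tendsto (fun ε : ℝ => eval (u + ε • e + t • w) g ^ 2) (𝓝[>] 0)
      (𝓝 (eval (u + t • w) g ^ 2)) := by
    have hc : Continuous fun ε : ℝ => eval (u + ε • e + t • w) g ^ 2 :=
      ((continuous_eval g).comp (by fun_prop)).pow 2
    simpa using (hc.tendsto 0).mono_left (nhdsWithin_le_nhds (s := Set.Ioi 0))
  exact pow_eq_zero_iff two_ne_zero |>.1
    (le_antisymm (le_of_tendsto_of_tendsto hsq hlim hbound) (sq_nonneg _))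

end IsHyperbolicForm

namespace IsNuijStage

theorem exists_add_smul_notMem (S : IsNuijStage l e d N g) (u : Fin n → ℝ) (hw : w ≠ 0) :
    ∃ t : ℝ, u + t • w ∉ hypCone g e := by
  by_contra! hline
  have hform : eval w (linearForm l) = 0 := by
    by_contra hne
    have h := S.linearForm_nonneg (hline (-(eval u (linearForm l) + 1) / eval w (linearForm l)))
    rw [← eval_linePoly, linePoly_linearForm] at h
    simp only [Polynomial.eval_add, Polynomial.eval_mul, Polynomial.eval_C, Polynomial.eval_X,
      mul_div_cancel₀ _ hne] at h
    linarith
  have hmem : w ∈ hypCone g e := by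
    have hlim : Filter.Tendsto (fun t : ℝ => t • u + w) (𝓝[>] 0) (𝓝 w) := by
      have hc : Continuous fun t : ℝ => t • u + w := by fun_prop
      simpa using (hc.tendsto 0).mono_left (nhdsWithin_le_nhds (s := Set.Ioi 0))
    refine S.isClosed_hypCone.mem_of_tendsto hlim ?_
    filter_upwards [self_mem_nhdsWithin] with t ht
    have h := S.smul_mem (hline t⁻¹) (Set.mem_Ioi.1 ht).le
    rwa [smul_add, smul_inv_smul₀ (Set.mem_Ioi.1 ht).ne'] at h
  exact (S.linearForm_pos w hmem hw).ne' hform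

theorem linePoly_ne_zero (S : IsNuijStage l e d 1 g) (hu : u ∈ hypCone g e) (hu0 : u ≠ 0)
    (hw : w ∉ Submodule.span ℝ {u}) : linePoly g u w ≠ 0 := by
  intro hline
  have hzero (t : ℝ) : eval (u + t • w) g = 0 := by
    rw [← eval_linePoly, hline, Polynomial.eval_zero]
  have hne (t : ℝ) : u + t • w ≠ 0 := by
    intro h
    have ht : t ≠ 0 := by
      rintro rfl
      exact hu0 (by simpa using h)
    refine hw (Submodule.mem_span_singleton.2 ⟨-t⁻¹, ?_⟩)
    rw [eq_neg_of_add_eq_zero_left h, neg_smul_neg, inv_smul_smul₀ ht]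
  have hc : Continuous fun t : ℝ => u + t • w := by fun_prop
  have hclopen : IsClopen {t : ℝ | u + t • w ∈ hypCone g e} := by
    refine ⟨S.isClosed_hypCone.preimage hc, isOpen_iff_eventually.2 fun t ht => ?_⟩
    filter_upwards [hc.continuousAt.eventually
      (S.eventually_mem_hypCone ht (S.eval_dirDeriv_pos ht (hne t) (hzero t)))] with s hs
    exact hs (hzero s).ge
  obtain ⟨t, ht⟩ := S.exists_add_smul_notMem u (w := w) (by rintro rfl; exact hw (zero_mem _))
  exact ht (hclopen.eq_univ ⟨0, by simpa using hu⟩ ▸ Set.mem_univ t :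
    t ∈ {t : ℝ | u + t • w ∈ hypCone g e})

theorem eval_dirDeriv_dirDeriv_neg (S : IsNuijStage l e d 1 g) (hu : u ∈ hypCone g e)
    (hu0 : u ≠ 0) (h0 : eval u g = 0) (hw : w ∉ Submodule.span ℝ {u})
    (h1 : eval u (dirDeriv w g) = 0) : eval u (dirDeriv w (dirDeriv w g)) < 0 := by
  by_contra! h2
  exact S.linePoly_ne_zero hu hu0 hw
    (S.linePoly_eq_zero hu h0 (S.eval_dirDeriv_pos hu hu0 h0) h1 h2)

theorem two_le_degree (S : IsNuijStage l e d N g) (hu : u ∈ hypCone g e) (hu0 : u ≠ 0)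
    (h0 : eval u g = 0) : 2 ≤ d := by
  by_contra! hlt
  obtain rfl : d = 1 := by have := S.degree_ne_zero; omega
  have hlinear (y : Fin n → ℝ) : polar g (linearForm y) = eval y g := by
    rw [← polar_linearForm_pow S.isHomogeneous, pow_one]
  have hneg : -u ∈ hypCone g e := S.mem_hypCone_iff.2 fun t ht => by
    rw [← hlinear, map_add, map_add, map_neg, map_neg, map_smul, map_smul, hlinear, hlinear, h0,
      neg_zero, zero_add]
    exact mul_pos ht S.eval_pos
  have hpos := S.linearForm_pos (-u) hneg (neg_ne_zero.2 hu0)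
  have hpos' := S.linearForm_pos u hu hu0
  simp only [eval_linearForm, Pi.neg_apply, mul_neg, Finset.sum_neg_distrib] at hpos hpos'
  linarith

end IsNuijStage

end BoundaryGeometry

section PolarHessian

/-- The bilinear form `(x, y) ↦ polar g (u, …, u, x, y)` with `m` arguments equal to `u`; for `g`
homogeneous of degree `m + 2` it is the Hessian of `g` at `u` up to a positive factor. -/
noncomputable def polarHessian {n : ℕ} (g : MvPolynomial (Fin n) ℝ) (u : Fin n → ℝ) (m : ℕ) :
    LinearMap.BilinForm ℝ (Fin n → ℝ) :=
  ((LinearMap.mul ℝ (MvPolynomial (Fin n) ℝ)).compr₂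
    (polar g ∘ₗ LinearMap.mulLeft ℝ (linearForm u ^ m))).compl₁₂ linearForm linearForm

variable {n m : ℕ} {g : MvPolynomial (Fin n) ℝ} {l e u : Fin n → ℝ}

theorem polarHessian_apply (g : MvPolynomial (Fin n) ℝ) (u : Fin n → ℝ) (m : ℕ)
    (x y : Fin n → ℝ) :
    polarHessian g u m x y = polar g (linearForm u ^ m * (linearForm x * linearForm y)) :=
  rfl

theorem isSymm_polarHessian (g : MvPolynomial (Fin n) ℝ) (u : Fin n → ℝ) (m : ℕ) :
    (polarHessian g u m).IsSymm :=
  ⟨fun x y => by simp only [polarHessian_apply, mul_comm (linearForm x)]⟩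

theorem eval_dirDeriv_eq_polarHessian (hg : g.IsHomogeneous (m + 2)) (u v : Fin n → ℝ) :
    eval u (dirDeriv v g) = (m + 2) * polarHessian g u m u v := by
  rw [← coeff_one_linePoly, linePoly_eq_restrictLine, coeff_restrictLine hg u v (by omega),
    polarHessian_apply, ← mul_assoc, ← pow_succ]
  simp

theorem eval_dirDeriv_dirDeriv_eq_polarHessian (hg : g.IsHomogeneous (m + 2))
    (u v : Fin n → ℝ) : eval u (dirDeriv v (dirDeriv v g)) =
      2 * (m + 2).choose 2 * polarHessian g u m v v := by
  rw [← coeff_one_linePoly, linePoly_dirDeriv, Polynomial.coeff_derivative,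
    linePoly_eq_restrictLine, coeff_restrictLine hg u v (by omega), polarHessian_apply, ← sq]
  push_cast
  ring

theorem exists_dual_neg_of_neg_on_orthogonal {K V : Type*} [Field K] [LinearOrder K]
    [IsStrictOrderedRing K] [AddCommGroup V] [Module K V] {B : LinearMap.BilinForm K V}
    (hB : B.IsSymm) {u v : V} (huu : B u u = 0) (huv : B u v ≠ 0)
    (hneg : ∀ w ∉ Submodule.span K {u}, B u w = 0 → B w w < 0) :
    ∃ s : Module.Dual K V, s u = 1 ∧ ∀ w ≠ 0, s w = 0 → B w w < 0 := by
  set z := v + ((1 - B v v) / (2 * B u v)) • u with hz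
  have huz : B u z = B u v := by simp [hz, huu]
  have hzu : B z u = B u v := (hB.eq u z).symm.trans huz
  have hzz : B z z = 1 := by
    have hvu : B v u = B u v := hB.eq v u
    simp only [hz, map_add, map_smul, LinearMap.add_apply, LinearMap.smul_apply, smul_eq_mul, huu,
      hvu]
    field_simp
    ring
  refine ⟨(B u v)⁻¹ • B z, by simp [hzu, huv], fun w hw hzw => ?_⟩
  replace hzw : B z w = 0 := by simpa [huv] using hzw
  have hwz : B w z = 0 := (hB.eq w z).trans hzw
  set c := B u w / B u v
  have hproj : B u (w - c • z) = 0 := by simp [huz, c, huv]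
  have hsq : B (w - c • z) (w - c • z) = B w w + c ^ 2 := by
    simp only [map_sub, map_smul, LinearMap.sub_apply, LinearMap.smul_apply, smul_eq_mul, hzw, hwz,
      hzz]
    ring
  by_cases hspan : w - c • z ∈ Submodule.span K {u}
  · obtain ⟨b, hb⟩ := Submodule.mem_span_singleton.1 hspan
    have hzero : B (w - c • z) (w - c • z) = 0 := by simp [← hb, huu]
    have hc : c ≠ 0 := by
      intro hc
      have hwb : w = b • u := by rw [hb, hc, zero_smul, sub_zero]
      rw [hwb, map_smul, hzu, smul_eq_mul, mul_eq_zero_iff_right huv] at hzw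
      exact hw (by rw [hwb, hzw, zero_smul])
    have := sq_pos_of_ne_zero hc
    linarith
  · have := hneg _ hspan hproj
    nlinarith [sq_nonneg c]

theorem IsNuijStage.exists_dual_polarHessian_neg (S : IsNuijStage l e (m + 2) 1 g)
    (hu : u ∈ hypCone g e) (hu0 : u ≠ 0) (h0 : eval u g = 0) :
    ∃ s : Module.Dual ℝ (Fin n → ℝ), s u = 1 ∧ ∀ w ≠ 0, s w = 0 → polarHessian g u m w w < 0 := by
  refine exists_dual_neg_of_neg_on_orthogonal (isSymm_polarHessian g u m) (v := e) ?_ ?_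
    fun w hw huw => ?_
  · rw [polarHessian_apply, ← sq, ← pow_add, polar_linearForm_pow S.isHomogeneous, h0]
  · have hD := S.eval_dirDeriv_pos hu hu0 h0
    rw [eval_dirDeriv_eq_polarHessian S.isHomogeneous] at hD
    exact (right_ne_zero_of_mul hD.ne')
  · have h := S.eval_dirDeriv_dirDeriv_neg hu hu0 h0 hw
      (by rw [eval_dirDeriv_eq_polarHessian S.isHomogeneous, huw, mul_zero])
    rw [eval_dirDeriv_dirDeriv_eq_polarHessian S.isHomogeneous] at h
    exact neg_of_mul_neg_right h (by positivity)

theorem continuous_prod_linearForm_mul_sq (Φ : Module.Dual ℝ (MvPolynomial (Fin n) ℝ)) :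
    Continuous fun z : (Fin m → Fin n → ℝ) × (Fin n → ℝ) =>
      Φ ((∏ k, linearForm (z.1 k)) * linearForm z.2 ^ 2) := by
  have hpoints : Continuous fun z : (Fin m → Fin n → ℝ) × (Fin n → ℝ) =>
      Sum.elim z.1 fun _ : Fin 2 => z.2 :=
    continuous_pi fun k => k.casesOn (fun k => by simpa using by fun_prop) fun _ => continuous_snd
  have h := (continuous_prod_linearForm Φ).comp hpoints
  simp only [Function.comp_def, Fintype.prod_sum_type, Sum.elim_inl, Sum.elim_inr,
    Finset.prod_const, Finset.card_univ, Fintype.card_fin] at h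
  exact h

theorem eventually_forall_prod_linearForm_mul_sq_nonpos {Φ : Module.Dual ℝ (MvPolynomial (Fin n) ℝ)}
    {s : Module.Dual ℝ (Fin n → ℝ)}
    (hneg : ∀ w ≠ 0, s w = 0 → Φ (linearForm u ^ m * linearForm w ^ 2) < 0) :
    ∀ᶠ p : Fin m → Fin n → ℝ in 𝓝 fun _ => u, ∀ w, s w = 0 →
      Φ ((∏ k, linearForm (p k)) * linearForm w ^ 2) ≤ 0 := by
  have hcompact : IsCompact (Metric.sphere (0 : Fin n → ℝ) 1 ∩ {w | s w = 0}) :=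
    (isCompact_sphere _ _).inter_right
      (isClosed_eq s.continuous_of_finiteDimensional continuous_const)
  have hev : ∀ᶠ p in 𝓝 fun _ : Fin m => u, ∀ w ∈ Metric.sphere 0 1 ∩ {w | s w = 0},
      Φ ((∏ k, linearForm (p k)) * linearForm w ^ 2) < 0 := by
    refine hcompact.eventually_forall_of_forall_eventually fun w hw =>
      (continuous_prod_linearForm_mul_sq Φ).continuousAt.eventually (gt_mem_nhds ?_)
    simpa using hneg w (ne_zero_of_mem_unit_sphere ⟨w, hw.1⟩) hw.2
  filter_upwards [hev] with p hp w hw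
  rcases eq_or_ne w 0 with rfl | hw0
  · simp
  have hnorm : ‖w‖ ≠ 0 := norm_ne_zero_iff.2 hw0
  have h := hp (‖w‖⁻¹ • w) ⟨by simp [norm_smul, hnorm], by simp [hw]⟩
  rw [map_smul, smul_pow, mul_smul_comm, map_smul, smul_eq_mul] at h
  exact (neg_of_mul_neg_right h (by positivity)).le

end PolarHessian

open scoped Pointwise

section SpectrahedralCones

/-- A spectrahedral cone in a real vector space: the preimage of the cone of positive semidefinite
matrices under a linear map to the symmetric matrices of some size. The ambient space may be
infinite-dimensional, so that spaces of moment functionals are covered. -/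
def IsSpectrahedralCone {V : Type*} [AddCommGroup V] [Module ℝ V] (S : Set V) : Prop :=
  ∃ (d : ℕ) (A : V →ₗ[ℝ] Matrix (Fin d) (Fin d) ℝ),
    (∀ v, (A v).IsSymm) ∧ S = {v | (A v).PosSemidef}

variable {V W : Type*} [AddCommGroup V] [Module ℝ V] [AddCommGroup W] [Module ℝ W] {n : ℕ}

theorem posSemidef_blockDiagonal'_iff {J : Type*} {κ : J → Type*} [Finite J] [∀ j, Finite (κ j)]
    [DecidableEq J] {M : ∀ j, Matrix (κ j) (κ j) ℝ} :
    (Matrix.blockDiagonal' M).PosSemidef ↔ ∀ j, (M j).PosSemidef := by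
  have := Fintype.ofFinite J
  have := fun j => Fintype.ofFinite (κ j)
  refine ⟨fun h j => ?_, fun h => Matrix.posSemidef_iff_dotProduct_mulVec.2 ⟨?_, fun x => ?_⟩⟩
  · rw [← Matrix.blockDiag'_blockDiagonal' M]
    exact h.submatrix (Sigma.mk j)
  · rw [Matrix.IsHermitian, Matrix.blockDiagonal'_conjTranspose]
    exact congrArg _ (funext fun j => (h j).1)
  · have hsum : star x ⬝ᵥ (Matrix.blockDiagonal' M).mulVec x =
        ∑ j, star (fun a => x ⟨j, a⟩) ⬝ᵥ (M j).mulVec fun a => x ⟨j, a⟩ := by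
      simp only [dotProduct, Matrix.mulVec, Fintype.sum_sigma]
      refine Finset.sum_congr rfl fun j _ => Finset.sum_congr rfl fun a _ => ?_
      rw [Finset.sum_eq_single j]
      · simp
      · intro i _ hij
        simp [Matrix.blockDiagonal'_apply_ne M _ _ hij.symm]
      · simp
    rw [hsum]
    exact Finset.sum_nonneg fun j _ => (h j).dotProduct_mulVec_nonneg _

theorem isSpectrahedralCone_setOf_posSemidef {κ : Type*} [Finite κ] (A : V →ₗ[ℝ] Matrix κ κ ℝ)
    (hA : ∀ v, (A v).IsSymm) : IsSpectrahedralCone {v | (A v).PosSemidef} := by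
  have := Fintype.ofFinite κ
  let r := (Fintype.equivFin κ).symm
  refine ⟨_, (Matrix.reindexLinearEquiv ℝ ℝ r.symm r.symm).toLinearMap ∘ₗ A,
    fun v => (hA v).submatrix r, Set.ext fun v => ?_⟩
  exact (Matrix.posSemidef_submatrix_equiv r).symm

namespace IsSpectrahedralCone

theorem iInter {J : Type*} [Finite J] {S : J → Set V} (hS : ∀ j, IsSpectrahedralCone (S j)) :
    IsSpectrahedralCone (⋂ j, S j) := by
  classical
  choose d A hA hSA using hS
  have h := isSpectrahedralCone_setOf_posSemidef
    ({ toFun := fun v => Matrix.blockDiagonal' fun j => A j v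
       map_add' := fun v w => by
        simp only [map_add]; exact Matrix.blockDiagonal'_add (fun j => A j v) _
       map_smul' := fun c v => by
        simp only [map_smul]; exact Matrix.blockDiagonal'_smul c fun j => A j v } :
      V →ₗ[ℝ] Matrix (Σ j, Fin (d j)) (Σ j, Fin (d j)) ℝ)
    fun v => by
      simp only [LinearMap.coe_mk, AddHom.coe_mk, Matrix.IsSymm, Matrix.blockDiagonal'_transpose]
      exact congrArg _ (funext fun j => hA j v)
  convert h using 1
  ext v
  simp [hSA, posSemidef_blockDiagonal'_iff]

theorem inter {S T : Set V} (hS : IsSpectrahedralCone S) (hT : IsSpectrahedralCone T) :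
    IsSpectrahedralCone (S ∩ T) := by
  rw [Set.inter_eq_iInter]
  exact iInter fun b => by cases b <;> assumption

theorem preimage {S : Set W} (hS : IsSpectrahedralCone S) (f : V →ₗ[ℝ] W) :
    IsSpectrahedralCone (f ⁻¹' S) := by
  obtain ⟨d, A, hA, rfl⟩ := hS
  exact ⟨d, A ∘ₗ f, fun v => hA (f v), rfl⟩

/- The conditions `A v ⪰ 0` and `L v = x` only depend on the image of `v` in the finite-dimensional
range of `(A, L)`. -/
theorem image {S : Set V} (hS : IsSpectrahedralCone S) (L : V →ₗ[ℝ] Fin n → ℝ) :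
    IsSpectrahedralShadowCone (L '' S) := by
  obtain ⟨d, A, hA, rfl⟩ := hS
  let b := Module.finBasis ℝ (A.prod L).range
  refine ⟨_, d, fun i => (b i).1.1,
    LinearMap.snd ℝ _ _ ∘ₗ (A.prod L).range.subtype ∘ₗ b.equivFun.symm.toLinearMap, fun i => ?_, ?_⟩
  · obtain ⟨v, hv⟩ := (b i).2
    simpa only [← hv] using! hA v
  have hfst (c) : ∑ i, c i • (b i).1.1 = (b.equivFun.symm c).1.1 := by
    simp [Module.Basis.equivFun_symm_apply, Prod.fst_sum]
  ext x
  simp only [hfst, Set.mem_image, Set.mem_ofPred_eq]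
  constructor
  · rintro ⟨v, hv, rfl⟩
    exact ⟨b.equivFun ⟨(A v, L v), v, rfl⟩, by simpa using hv, by simp⟩
  · rintro ⟨c, hc, rfl⟩
    obtain ⟨v, hv⟩ := (b.equivFun.symm c).2
    rw [← hv] at hc
    exact ⟨v, hc, congrArg Prod.snd hv⟩

end IsSpectrahedralCone

theorem isSpectrahedralCone_setOf_nonneg (f : Module.Dual ℝ V) :
    IsSpectrahedralCone {v | 0 ≤ f v} := by
  convert isSpectrahedralCone_setOf_posSemidef (f.smulRight (1 : Matrix Unit Unit ℝ))
    (fun v => by simp [Matrix.IsSymm]) using 1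
  ext v
  refine ⟨fun h => Matrix.PosSemidef.one.smul h, fun h => ?_⟩
  simpa using Matrix.PosSemidef.diag_nonneg h (i := ())

namespace IsSpectrahedralShadowCone

variable {S T : Set (Fin n → ℝ)}

theorem exists_isSpectrahedralCone (hS : IsSpectrahedralShadowCone S) :
    ∃ (m : ℕ) (C : Set (Fin m → ℝ)) (L : (Fin m → ℝ) →ₗ[ℝ] Fin n → ℝ),
      IsSpectrahedralCone C ∧ S = L '' C := by
  obtain ⟨m, d, M, L, hM, rfl⟩ := hS
  refine ⟨m, _, L, ⟨d, Fintype.linearCombination ℝ M, fun v => ?_, rfl⟩, rfl⟩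
  rw [Fintype.linearCombination_apply, Matrix.IsSymm, Matrix.transpose_sum]
  exact Finset.sum_congr rfl fun i _ => by rw [Matrix.transpose_smul, hM i]

theorem add (hS : IsSpectrahedralShadowCone S) (hT : IsSpectrahedralShadowCone T) :
    IsSpectrahedralShadowCone (S + T) := by
  obtain ⟨_, C, L, hC, rfl⟩ := hS.exists_isSpectrahedralCone
  obtain ⟨_, D, M, hD, rfl⟩ := hT.exists_isSpectrahedralCone
  convert ((hC.preimage (LinearMap.fst ℝ _ _)).inter (hD.preimage (LinearMap.snd ℝ _ _))).image
    (L.coprod M) using 1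
  ext x
  simp only [Set.mem_add, Set.mem_image, exists_exists_and_eq_and, LinearMap.coprod_apply,
    LinearMap.coe_fst, LinearMap.coe_snd, Set.mem_inter_iff, Set.mem_preimage, Prod.exists]
  aesop

theorem smul_mem (hS : IsSpectrahedralShadowCone S) {x : Fin n → ℝ} (hx : x ∈ S) {c : ℝ}
    (hc : 0 ≤ c) : c • x ∈ S := by
  obtain ⟨_, _, L, ⟨_, A, _, rfl⟩, rfl⟩ := hS.exists_isSpectrahedralCone
  obtain ⟨v, hv, rfl⟩ := hx
  refine ⟨c • v, ?_, map_smul L c v⟩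
  rw [Set.mem_ofPred_eq, map_smul]
  exact Matrix.PosSemidef.smul hv hc

theorem zero_mem (hS : IsSpectrahedralShadowCone S) : 0 ∈ S := by
  obtain ⟨_, _, L, ⟨_, A, _, rfl⟩, rfl⟩ := hS.exists_isSpectrahedralCone
  exact ⟨0, by simp [Matrix.PosSemidef.zero], map_zero L⟩

end IsSpectrahedralShadowCone

theorem isSpectrahedralShadowCone_ray (e : Fin n → ℝ) :
    IsSpectrahedralShadowCone ((fun t : ℝ => t • e) '' Set.Ici 0) :=
  (isSpectrahedralCone_setOf_nonneg (LinearMap.id : ℝ →ₗ[ℝ] ℝ)).image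
    (LinearMap.toSpanSingleton ℝ _ e)

theorem isSpectrahedralShadowCone_zero : IsSpectrahedralShadowCone (0 : Set (Fin n → ℝ)) := by
  convert isSpectrahedralShadowCone_ray (0 : Fin n → ℝ) using 1
  simp only [smul_zero, Set.nonempty_Ici.image_const, Set.singleton_zero]

end SpectrahedralCones

section MomentRelaxation

open TensorProduct

variable {A ι : Type*} [CommRing A] [Algebra ℝ A] {m : ℕ}

/-- Contraction `p ⊗ q ↦ Φ q • p` of the second tensor factor against a linear functional `Φ`. -/
noncomputable def contract (ι : Type*) (Φ : Module.Dual ℝ A) :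
    MvPolynomial ι ℝ ⊗[ℝ] A →ₗ[ℝ] MvPolynomial ι ℝ :=
  (TensorProduct.rid ℝ (MvPolynomial ι ℝ)).toLinearMap ∘ₗ Φ.lTensor _

/-- The linear combination `∑ a, Xₐ yₐ` with indeterminate coefficients. -/
noncomputable def genericCombination [Fintype ι] (y : ι → A) : MvPolynomial ι ℝ ⊗[ℝ] A :=
  ∑ a, (X a : MvPolynomial ι ℝ) ⊗ₜ y a

theorem contract_tmul (Φ : Module.Dual ℝ A) (p : MvPolynomial ι ℝ) (q : A) :
    contract ι Φ (p ⊗ₜ q) = Φ q • p := by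
  simp [contract]

theorem eval_contract_genericCombination_pow [Fintype ι] (Φ : Module.Dual ℝ A) (y : ι → A)
    (c : ι → ℝ) (N : ℕ) :
    eval c (contract ι Φ (genericCombination y ^ N)) = Φ ((∑ a, c a • y a) ^ N) := by
  let θ : MvPolynomial ι ℝ ⊗[ℝ] A →ₐ[ℝ] A :=
    (Algebra.TensorProduct.lid ℝ A).toAlgHom.comp
      (Algebra.TensorProduct.map (aeval c) (AlgHom.id ℝ A))
  have hθ (t) : eval c (contract ι Φ t) = Φ (θ t) := by
    induction t using TensorProduct.induction_on with
    | zero => simp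
    | tmul p q => simp [contract_tmul, θ, smul_eval, mul_comm]
    | add s t hs ht => rw [map_add, map_add, hs, ht, map_add, map_add]
  rw [hθ, map_pow]
  simp [genericCombination, θ, map_sum]

theorem prod_tmul {κ : Type*} [Fintype κ] (f : κ → MvPolynomial ι ℝ) (g : κ → A) :
    ∏ k, f k ⊗ₜ[ℝ] g k = (∏ k, f k) ⊗ₜ[ℝ] ∏ k, g k := by
  have htmul (p : MvPolynomial ι ℝ) (q : A) : p ⊗ₜ[ℝ] q =
      Algebra.TensorProduct.includeLeft (R := ℝ) (S := ℝ) p *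
        Algebra.TensorProduct.includeRight (R := ℝ) q := by
    simp
  simp only [htmul, Finset.prod_mul_distrib, map_prod]

theorem prod_genericCombination [Fintype ι] {κ : Type*} [Fintype κ] [DecidableEq κ]
    (p : κ → ι → A) :
    ∏ k, genericCombination (p k) = ∑ J : κ → ι,
      (∏ k, (X (J k) : MvPolynomial ι ℝ)) ⊗ₜ[ℝ] ∏ k, p k (J k) := by
  simp only [genericCombination, Finset.prod_univ_sum, Fintype.piFinset_univ, prod_tmul]

/-- Functionals on polynomials which satisfy the positivity conditions of degree `m + 2` met by the
nonnegative multiples of evaluations at points `x ≥ 0` with `G x ≥ 0`. -/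
def momentRelaxation [Fintype ι] (m : ℕ) (G : MvPolynomial ι ℝ) :
    Set (Module.Dual ℝ (MvPolynomial ι ℝ)) :=
  {L | (∀ J : Fin m → ι, (Matrix.of fun a b => L ((∏ k, X (J k)) * (X a * X b))).PosSemidef) ∧
    (∀ a, 0 ≤ L (X a * (∑ b, X b) ^ (m + 1))) ∧ 0 ≤ L G}

theorem isSpectrahedralCone_momentRelaxation [Fintype ι] (m : ℕ) (G : MvPolynomial ι ℝ) :
    IsSpectrahedralCone (momentRelaxation m G) := by
  let momentMatrix (J : Fin m → ι) :
      Module.Dual ℝ (MvPolynomial ι ℝ) →ₗ[ℝ] Matrix ι ι ℝ :=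
    { toFun := fun L => Matrix.of fun a b => L ((∏ k, X (J k)) * (X a * X b))
      map_add' := fun _ _ => rfl
      map_smul' := fun _ _ => rfl }
  have hmoment := IsSpectrahedralCone.iInter fun J =>
    isSpectrahedralCone_setOf_posSemidef (momentMatrix J) fun L =>
      Matrix.ext fun a b => congrArg (fun p => L (_ * p)) (mul_comm (X b) (X a))
  have hmean := IsSpectrahedralCone.iInter fun a : ι =>
    isSpectrahedralCone_setOf_nonneg
      (Module.Dual.eval ℝ (MvPolynomial ι ℝ) (X a * (∑ b, X b) ^ (m + 1)))
  convert hmoment.inter (hmean.inter (isSpectrahedralCone_setOf_nonneg (Module.Dual.eval ℝ _ G)))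
  ext L
  simp only [Set.mem_inter_iff, Set.mem_iInter]
  rfl

theorem smul_aeval_mem_momentRelaxation [Fintype ι] {G : MvPolynomial ι ℝ} {x : ι → ℝ}
    (hx : ∀ a, 0 ≤ x a) (hG : 0 ≤ eval x G) {c : ℝ} (hc : 0 ≤ c) :
    c • (aeval x).toLinearMap ∈ momentRelaxation m G := by
  refine ⟨fun J => ?_, fun a => ?_, ?_⟩
  · convert (Matrix.posSemidef_vecMulVec_self_star x).smul
      (mul_nonneg hc (Finset.prod_nonneg fun k (_ : k ∈ Finset.univ) => hx (J k))) using 1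
    ext a b
    simp [Matrix.vecMulVec_apply, mul_assoc]
  · have := hx a
    have := Finset.sum_nonneg fun b (_ : b ∈ Finset.univ) => hx b
    simp only [LinearMap.smul_apply, AlgHom.toLinearMap_apply, map_mul, map_pow, map_sum, aeval_X,
      smul_eq_mul]
    positivity
  · simpa [coe_aeval_eq_eval] using mul_nonneg hc hG

theorem sum_posSemidef_mul_nonpos [Fintype ι] {M : Matrix ι ι ℝ} (hM : M.PosSemidef)
    {Ψ : Module.Dual ℝ A} {W : Submodule ℝ A} (hΨ : ∀ w ∈ W, Ψ (w ^ 2) ≤ 0) {w : ι → A}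
    (hw : ∀ a, w a ∈ W) : ∑ a, ∑ b, M a b * Ψ (w a * w b) ≤ 0 := by
  obtain ⟨N, z, rfl⟩ := Matrix.posSemidef_iff_eq_sum_vecMulVec.1 hM
  have hsq : ∑ a, ∑ b, (∑ i, Matrix.vecMulVec (z i) (star (z i))) a b * Ψ (w a * w b) =
      ∑ i, Ψ ((∑ a, z i a • w a) ^ 2) := by
    have hterm (i) : Ψ ((∑ a, z i a • w a) ^ 2) = ∑ a, ∑ b, z i a * z i b * Ψ (w a * w b) := by
      simp only [sq, Finset.sum_mul_sum, smul_mul_smul_comm, map_sum, map_smul, smul_eq_mul]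
    simp only [hterm, Matrix.sum_apply, Matrix.vecMulVec_apply, star_trivial, Finset.sum_mul]
    exact Finset.sum_comm_cycle
  rw [hsq]
  exact Finset.sum_nonpos fun i _ => hΨ _ (W.sum_mem fun a _ => W.smul_mem _ (hw a))

theorem pow_add_two_eq_add_sum {R : Type*} [CommRing R] (a b : R) (m : ℕ) :
    b ^ (m + 2) = a ^ (m + 2) + (m + 2) • (a ^ (m + 1) * (b - a)) +
      ∑ i ∈ Finset.range (m + 1), (i + 1) • (a ^ i * b ^ (m - i) * (b - a) ^ 2) := by
  induction m with
  | zero => simp; ring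
  | succ m ih =>
    have hfactor : ∑ i ∈ Finset.range (m + 1), (i + 1) • (a ^ i * b ^ (m + 1 - i) * (b - a) ^ 2) =
        b * ∑ i ∈ Finset.range (m + 1), (i + 1) • (a ^ i * b ^ (m - i) * (b - a) ^ 2) := by
      rw [Finset.mul_sum]
      refine Finset.sum_congr rfl fun i hi => ?_
      rw [Nat.succ_sub (Finset.mem_range_succ_iff.1 hi), pow_succ, mul_smul_comm]
      ring
    rw [Finset.sum_range_succ, hfactor, ← sub_eq_iff_eq_add'.2 ih, Nat.sub_self]
    simp only [nsmul_eq_mul]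
    push_cast
    ring

section Jensen

variable [Fintype ι] {Φ : Module.Dual ℝ A} {L : Module.Dual ℝ (MvPolynomial ι ℝ)} {B : Set A}
  {W : Submodule ℝ A} {y : ι → A}

theorem contract_prod_mul_sq_nonpos
    (hΦ : ∀ p : Fin m → A, (∀ k, p k ∈ B) → ∀ w ∈ W, Φ ((∏ k, p k) * w ^ 2) ≤ 0)
    (hL : ∀ J : Fin m → ι,
      (Matrix.of fun a b => L ((∏ k, X (J k)) * (X a * X b))).PosSemidef)
    {p : Fin m → ι → A} (hp : ∀ k a, p k a ∈ B) {w : ι → A} (hw : ∀ a, w a ∈ W) :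
    L (contract ι Φ ((∏ k, genericCombination (p k)) * genericCombination w ^ 2)) ≤ 0 := by
  rw [prod_genericCombination, genericCombination, sq, Finset.sum_mul_sum, Finset.sum_mul]
  simp only [Finset.mul_sum, Algebra.TensorProduct.tmul_mul_tmul, map_sum, contract_tmul, map_smul,
    smul_eq_mul]
  refine Finset.sum_nonpos fun J _ => ?_
  have h := sum_posSemidef_mul_nonpos (hL J) (Ψ := Φ ∘ₗ LinearMap.mulLeft ℝ (∏ k, p k (J k)))
    (hΦ _ fun k => hp k _) hw
  simpa only [Matrix.of_apply, LinearMap.comp_apply, LinearMap.mulLeft_apply, mul_comm (L _)]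
    using h

/- Jensen's inequality for the concave function `y ↦ Φ (y ^ (m + 2))`, with the functional `L`
in place of a probability measure. -/
theorem contract_genericCombination_pow_le
    (hΦ : ∀ p : Fin m → A, (∀ k, p k ∈ B) → ∀ w ∈ W, Φ ((∏ k, p k) * w ^ 2) ≤ 0)
    (hL : ∀ J : Fin m → ι,
      (Matrix.of fun a b => L ((∏ k, X (J k)) * (X a * X b))).PosSemidef)
    (hy : ∀ a, y a ∈ B) {z : A} (hz : z ∈ B) (hyz : ∀ a, y a - z ∈ W)
    (hmean : ∑ a, L (X a * (∑ b, X b) ^ (m + 1)) • (y a - z) = 0) :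
    L (contract ι Φ (genericCombination y ^ (m + 2))) ≤
      L ((∑ b, X b) ^ (m + 2)) * Φ (z ^ (m + 2)) := by
  have hconst : genericCombination (fun _ : ι => z) = (∑ b, X b) ⊗ₜ[ℝ] z :=
    (TensorProduct.sum_tmul _ _ _).symm
  have hsub : genericCombination y - genericCombination (fun _ : ι => z) =
      genericCombination fun a => y a - z := by
    simp only [genericCombination, TensorProduct.tmul_sub, Finset.sum_sub_distrib]
  have hzero : L (contract ι Φ (genericCombination (fun _ : ι => z) ^ (m + 2))) =
      L ((∑ b, X b) ^ (m + 2)) * Φ (z ^ (m + 2)) := by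
    rw [hconst, Algebra.TensorProduct.tmul_pow, contract_tmul, map_smul, smul_eq_mul, mul_comm]
  have hone : L (contract ι Φ (genericCombination (fun _ : ι => z) ^ (m + 1) *
      genericCombination fun a => y a - z)) = 0 := by
    rw [← map_zero (Φ ∘ₗ LinearMap.mulLeft ℝ (z ^ (m + 1))), ← hmean, hconst,
      Algebra.TensorProduct.tmul_pow, genericCombination, Finset.mul_sum]
    simp only [Algebra.TensorProduct.tmul_mul_tmul, map_sum, contract_tmul, map_smul, smul_eq_mul,
      LinearMap.comp_apply, LinearMap.mulLeft_apply, mul_comm]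
  have htwo (i) (hi : i ∈ Finset.range (m + 1)) : L (contract ι Φ
      (genericCombination (fun _ : ι => z) ^ i * genericCombination y ^ (m - i) *
        (genericCombination fun a => y a - z) ^ 2)) ≤ 0 := by
    obtain ⟨j, rfl⟩ := Nat.exists_eq_add_of_le (Finset.mem_range_succ_iff.1 hi)
    have h := contract_prod_mul_sq_nonpos hΦ hL
      (p := Fin.append (fun _ : Fin i => fun _ => z) fun _ : Fin j => y)
      (fun k a => by cases k using Fin.addCases <;> simp [hz, hy]) hyz
    simpa [Fin.prod_univ_add] using h
  rw [pow_add_two_eq_add_sum (genericCombination fun _ => z), hsub]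
  simp only [map_add, map_sum, map_nsmul, hzero, hone, smul_zero, add_zero]
  exact add_le_of_nonpos_right (Finset.sum_nonpos fun i hi => nsmul_nonpos (htwo i hi) _)

theorem map_sum_smul_pow_nonneg (hB : Convex ℝ B)
    (hΦ : ∀ p : Fin m → A, (∀ k, p k ∈ B) → ∀ w ∈ W, Φ ((∏ k, p k) * w ^ 2) ≤ 0)
    (hy : ∀ a, y a ∈ B) (hW : ∀ a b, y a - y b ∈ W)
    (hL : L ∈ momentRelaxation m (contract ι Φ (genericCombination y ^ (m + 2)))) :
    0 ≤ Φ ((∑ a, L (X a * (∑ b, X b) ^ (m + 1)) • y a) ^ (m + 2)) := by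
  obtain ⟨hpsd, hnonneg, hpow⟩ := hL
  have hmass : ∑ a, L (X a * (∑ b, X b) ^ (m + 1)) = L ((∑ b, X b) ^ (m + 2)) := by
    rw [← map_sum, ← Finset.sum_mul, ← pow_succ']
  have hjensen := fun z hz => contract_genericCombination_pow_le hΦ hpsd hy (z := z) hz
  obtain ⟨μ, hμ⟩ : ∃ μ : ι → ℝ, ∀ a, L (X a * (∑ b, X b) ^ (m + 1)) = μ a := ⟨_, fun _ => rfl⟩
  simp only [← hmass, hμ] at hnonneg hjensen ⊢
  have hμ0 : ∀ a ∈ Finset.univ, 0 ≤ μ a := fun a _ => hnonneg a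
  rcases (Finset.sum_nonneg hμ0).eq_or_lt with h0 | hpos
  · have hμ_zero := (Finset.sum_eq_zero_iff_of_nonneg hμ0).1 h0.symm
    have hsum : ∑ a, μ a • y a = 0 :=
      Finset.sum_eq_zero fun a ha => by rw [hμ_zero a ha, zero_smul]
    rw [hsum, zero_pow (by omega), map_zero]
  set z := Finset.univ.centerMass μ y with hz
  have hcenter : ∑ a, μ a • y a = (∑ a, μ a) • z := by
    rw [hz, Finset.centerMass, smul_inv_smul₀ hpos.ne']
  have hyz (a) : y a - z ∈ W := by
    have : y a - z = Finset.univ.centerMass μ fun b => y a - y b := by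
      simp only [hz, Finset.centerMass, smul_sub, Finset.sum_sub_distrib, ← Finset.sum_smul]
      rw [inv_smul_smul₀ hpos.ne']
    rw [this]
    exact W.smul_mem _ (W.sum_mem fun b _ => W.smul_mem _ (hW a b))
  have hmean : ∑ a, μ a • (y a - z) = 0 := by
    simp only [smul_sub, Finset.sum_sub_distrib, ← Finset.sum_smul, hcenter, sub_self]
  have hle := hjensen z (hB.centerMass_mem hμ0 hpos fun a _ => hy a) hyz hmean
  rw [hcenter, smul_pow, map_smul]
  exact mul_nonneg (by positivity) (nonneg_of_mul_nonneg_right (hpow.trans hle) hpos)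

end Jensen

theorem isSpectrahedralShadowCone_setOf_pow_nonneg [Fintype ι] {n : ℕ}
    {f : (Fin n → ℝ) →ₗ[ℝ] A} {Φ : Module.Dual ℝ A} {W : Submodule ℝ (Fin n → ℝ)}
    {B : Set (Fin n → ℝ)} (hB : Convex ℝ B)
    (hΦ : ∀ p : Fin m → Fin n → ℝ, (∀ k, p k ∈ B) → ∀ w ∈ W, Φ ((∏ k, f (p k)) * f w ^ 2) ≤ 0)
    {v : ι → Fin n → ℝ} (hv : ∀ a, v a ∈ B) (hW : ∀ a b, v a - v b ∈ W) :
    IsSpectrahedralShadowCone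
      {x | (∃ c : ι → ℝ, (∀ a, 0 ≤ c a) ∧ ∑ a, c a • v a = x) ∧ 0 ≤ Φ (f x ^ (m + 2))} := by
  let mean : Module.Dual ℝ (MvPolynomial ι ℝ) →ₗ[ℝ] Fin n → ℝ :=
    ∑ a, (Module.Dual.eval ℝ (MvPolynomial ι ℝ) (X a * (∑ b, X b) ^ (m + 1))).smulRight (v a)
  have hmean (L) : mean L = ∑ a, L (X a * (∑ b, X b) ^ (m + 1)) • v a := by
    simp [mean]
  convert (isSpectrahedralCone_momentRelaxation m
    (contract ι Φ (genericCombination (f ∘ v) ^ (m + 2)))).image mean using 1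
  ext x
  constructor
  · rintro ⟨⟨c, hc, rfl⟩, hx⟩
    have hsum : 0 ≤ ∑ a, c a := Finset.sum_nonneg fun a _ => hc a
    refine ⟨_, smul_aeval_mem_momentRelaxation hc (by
      simpa [eval_contract_genericCombination_pow] using hx)
      (c := ((∑ a, c a) ^ (m + 1))⁻¹) (by positivity), ?_⟩
    rw [hmean]
    refine Finset.sum_congr rfl fun a ha => ?_
    rcases hsum.eq_or_lt with h0 | hpos
    · simp [(Finset.sum_eq_zero_iff_of_nonneg fun a _ => hc a).1 h0.symm a ha]
    · congr 1
      simp only [LinearMap.smul_apply, AlgHom.toLinearMap_apply, map_mul, map_pow, map_sum,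
        aeval_X, smul_eq_mul]
      field_simp
  · rintro ⟨L, hL, rfl⟩
    refine ⟨⟨_, hL.2.1, (hmean L).symm⟩, ?_⟩
    have h := map_sum_smul_pow_nonneg (hB.linear_image f) (W := W.map f) ?_
      (fun a => Set.mem_image_of_mem f (hv a))
      (fun a b => ⟨_, hW a b, map_sub f _ _⟩) hL
    · simpa [hmean] using h
    · rintro p hp _ ⟨w, hw, rfl⟩
      choose q hq hqp using hp
      simpa only [hqp] using hΦ q hq w hw

end MomentRelaxation

section LocalToGlobal

theorem exists_section_simplex {E : Type*} [NormedAddCommGroup E] [NormedSpace ℝ E]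
    [FiniteDimensional ℝ E] {s : Module.Dual ℝ E} {u : E} (hs : s u = 1) {B : Set E}
    (hB : B ∈ 𝓝 u) :
    ∃ v : Fin (Module.finrank ℝ E + 1) → E, (∀ a, v a ∈ B) ∧ (∀ a, s (v a) = 1) ∧
      ∀ᶠ x in 𝓝 u, ∃ c : Fin (Module.finrank ℝ E + 1) → ℝ,
        (∀ a, 0 ≤ c a) ∧ ∑ a, c a • v a = x := by
  have hcont : Continuous s := s.continuous_of_finiteDimensional
  have hproj : Filter.Tendsto (fun x => (s x)⁻¹ • x) (𝓝 u) (𝓝 u) := by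
    simpa only [hs, inv_one, one_smul, id_eq] using
      ((hcont.tendsto u).inv₀ (hs ▸ one_ne_zero)).smul Filter.tendsto_id
  obtain ⟨b, hu, hb⟩ := exists_mem_interior_convexHull_affineBasis
    (Filter.inter_mem (hcont.continuousAt.eventually (lt_mem_nhds (hs ▸ one_pos))) (hproj hB))
  replace hb (a) := hb (subset_convexHull ℝ _ (Set.mem_range_self a))
  have hpos (a) : 0 < s (b a) := (hb a).1
  refine ⟨fun a => (s (b a))⁻¹ • b a, fun a => (hb a).2, fun a => ?_, ?_⟩
  · rw [map_smul, smul_eq_mul, inv_mul_cancel₀ (hpos a).ne']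
  filter_upwards [mem_interior_iff_mem_nhds.1 hu] with x hx
  rw [b.convexHull_eq_nonneg_coord] at hx
  refine ⟨fun a => b.coord a x * s (b a), fun a => mul_nonneg (hx a) (hpos a).le, ?_⟩
  conv_rhs => rw [← b.linear_combination_coord_eq_self x]
  exact Finset.sum_congr rfl fun a _ => by rw [mul_smul, smul_inv_smul₀ (hpos a).ne']

variable {n : ℕ}

theorem exists_isSpectrahedralShadowCone_subset {K : AddSubmonoid (Fin n → ℝ)}
    {T : Set (Fin n → ℝ)} (hT : IsClosed T) (hsmul : ∀ c : ℝ, 0 ≤ c → ∀ x ∈ T, c • x ∈ T)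
    (hloc : ∀ u ∈ T, u ≠ 0 → ∃ P : Set (Fin n → ℝ), IsSpectrahedralShadowCone P ∧ P ⊆ K ∧
      ∀ᶠ x in 𝓝 u, x ∈ T → x ∈ P) :
    ∃ P : Set (Fin n → ℝ), IsSpectrahedralShadowCone P ∧ P ⊆ K ∧ T ⊆ P := by
  have hcompact : IsCompact (Metric.sphere 0 1 ∩ T) := (isCompact_sphere _ _).inter_right hT
  obtain ⟨P, hP, hPK, hTP⟩ : ∃ P : Set (Fin n → ℝ), IsSpectrahedralShadowCone P ∧ P ⊆ K ∧
      Metric.sphere 0 1 ∩ T ⊆ P := by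
    refine hcompact.induction_on ⟨0, isSpectrahedralShadowCone_zero, ?_, Set.empty_subset _⟩
      ?_ ?_ fun u hu => ?_
    · exact Set.singleton_subset_iff.2 K.zero_mem
    · rintro s t hst ⟨P, hP, hPK, htP⟩
      exact ⟨P, hP, hPK, hst.trans htP⟩
    · rintro s t ⟨P, hP, hPK, hsP⟩ ⟨Q, hQ, hQK, htQ⟩
      refine ⟨P + Q, hP.add hQ, Set.add_subset_iff.2 fun x hx y hy =>
        K.add_mem (hPK hx) (hQK hy), Set.union_subset ?_ ?_⟩
      · exact hsP.trans (Set.subset_add_left P hQ.zero_mem)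
      · exact htQ.trans (Set.subset_add_right Q hP.zero_mem)
    · obtain ⟨P, hP, hPK, hTP⟩ := hloc u hu.2 (ne_zero_of_mem_unit_sphere ⟨u, hu.1⟩)
      refine ⟨{x | x ∈ T → x ∈ P} ∩ (Metric.sphere 0 1 ∩ T),
        Filter.inter_mem (mem_nhdsWithin_of_mem_nhds hTP) self_mem_nhdsWithin, P, hP, hPK, ?_⟩
      exact fun x hx => hx.1 hx.2.2
  refine ⟨P, hP, hPK, fun x hx => ?_⟩
  rcases eq_or_ne x 0 with rfl | hx0
  · exact hP.zero_mem
  have hnorm : ‖x‖ ≠ 0 := norm_ne_zero_iff.2 hx0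
  rw [← smul_inv_smul₀ hnorm x]
  refine hP.smul_mem (hTP ⟨?_, hsmul _ (by positivity) x hx⟩) (norm_nonneg x)
  rw [mem_sphere_zero_iff_norm, norm_smul, norm_inv, norm_norm, inv_mul_cancel₀ hnorm]

end LocalToGlobal

section ShadowOfNuijStage

variable {n d : ℕ} {g : MvPolynomial (Fin n) ℝ} {l e a u : Fin n → ℝ}

theorem IsHyperbolicForm.exists_add_smul_eq (H : IsHyperbolicForm d g e) (hd : d ≠ 0)
    (ha : a ∈ hypCone g e) :
    ∃ b, (b ∈ hypCone g e ∧ eval b g = 0) ∧ ∃ t : ℝ, 0 ≤ t ∧ b + t • e = a := by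
  have hne : (linePoly g a e).roots.toFinset.Nonempty := by
    rw [Multiset.toFinset_nonempty, ← Multiset.card_pos,
      ← (H.realRooted a).splits.natDegree_eq_card_roots, H.natDegree_linePoly]
    exact Nat.pos_of_ne_zero hd
  obtain ⟨r, hr, hmax⟩ := Finset.exists_max_image _ id hne
  have h0 : eval (a + r • e) g = 0 := by
    rw [← eval_linePoly]
    exact Polynomial.isRoot_of_mem_roots (Multiset.mem_toFinset.1 hr)
  refine ⟨a + r • e, ⟨?_, h0⟩, -r, ?_, by module⟩
  · by_contra hmem
    obtain ⟨t, ht, hroot⟩ := H.exists_pos_root_of_notMem hmem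
    rw [eval_linePoly, add_assoc, ← add_smul, ← eval_linePoly] at hroot
    have hp : linePoly g a e ≠ 0 := by
      rintro h
      simp [h] at hne
    have := hmax (r + t) (Multiset.mem_toFinset.2 ((Polynomial.mem_roots hp).2 hroot))
    exact (lt_add_of_pos_right r ht).not_ge this
  · exact neg_nonneg.2 (not_lt.1 fun hr => (H.mem_hypCone_iff.1 ha r hr).ne' h0)

namespace IsNuijStage

theorem exists_local_concavity {m : ℕ} (S : IsNuijStage l e (m + 2) 1 g) (hu : u ∈ hypCone g e)
    (hu0 : u ≠ 0) (h0 : eval u g = 0) :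
    ∃ s : Module.Dual ℝ (Fin n → ℝ), s u = 1 ∧ ∃ ρ > 0,
      (∀ p : Fin m → Fin n → ℝ, (∀ k, p k ∈ Metric.ball u ρ) → ∀ w ∈ s.ker,
        polar g ((∏ k, linearForm (p k)) * linearForm w ^ 2) ≤ 0) ∧
      ∀ x ∈ Metric.ball u ρ, 0 ≤ eval x g → x ∈ hypCone g e := by
  obtain ⟨s, hsu, hneg⟩ := S.exists_dual_polarHessian_neg hu hu0 h0
  have hconcave := eventually_forall_prod_linearForm_mul_sq_nonpos (u := u) (m := m)
    (Φ := polar g) (s := s) fun w hw hsw => by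
      simpa only [polarHessian_apply, ← sq] using hneg w hw hsw
  obtain ⟨ρ₁, hρ₁, hball₁⟩ := Metric.eventually_nhds_iff_ball.1 hconcave
  obtain ⟨ρ₂, hρ₂, hball₂⟩ := Metric.eventually_nhds_iff_ball.1
    (S.eventually_mem_hypCone hu (S.eval_dirDeriv_pos hu hu0 h0))
  refine ⟨s, hsu, min ρ₁ ρ₂, lt_min hρ₁ hρ₂, fun p hp => hball₁ p ?_, fun x hx => hball₂ x ?_⟩
  · rw [ball_pi _ hρ₁]
    exact fun k _ => Metric.ball_subset_ball (min_le_left _ _) (hp k)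
  · exact Metric.ball_subset_ball (min_le_right _ _) hx

theorem exists_isSpectrahedralShadowCone_nhds (S : IsNuijStage l e d 1 g) (hu : u ∈ hypCone g e)
    (hu0 : u ≠ 0) (h0 : eval u g = 0) :
    ∃ P : Set (Fin n → ℝ), IsSpectrahedralShadowCone P ∧ P ⊆ hypCone g e ∧
      ∀ᶠ x in 𝓝 u, x ∈ hypCone g e → x ∈ P := by
  obtain ⟨m, rfl⟩ := Nat.exists_eq_add_of_le' (S.two_le_degree hu hu0 h0)
  obtain ⟨s, hsu, ρ, hρ, hconcave, hball⟩ := S.exists_local_concavity hu hu0 h0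
  obtain ⟨v, hv, hsv, hcomb⟩ := exists_section_simplex hsu (Metric.ball_mem_nhds u hρ)
  have hpolar (x) : polar g (linearForm x ^ (m + 2)) = eval x g :=
    polar_linearForm_pow S.isHomogeneous x
  refine ⟨_, isSpectrahedralShadowCone_setOf_pow_nonneg (convex_ball u ρ) hconcave hv
    fun a b => by rw [LinearMap.mem_ker, map_sub, hsv, hsv, sub_self], ?_, ?_⟩
  · rintro x ⟨⟨c, hc, rfl⟩, hx⟩
    rw [hpolar] at hx
    rcases (Finset.sum_nonneg fun a _ => hc a : 0 ≤ ∑ a, c a).eq_or_lt with hzero | hpos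
    · have hc0 := (Finset.sum_eq_zero_iff_of_nonneg fun a _ => hc a).1 hzero.symm
      rw [Finset.sum_eq_zero fun a ha => by rw [hc0 a ha, zero_smul]]
      exact S.zero_mem
    · rw [← smul_inv_smul₀ hpos.ne' (∑ a, c a • v a)]
      refine S.smul_mem (hball _ ?_ ?_) hpos.le
      · exact (convex_ball u ρ).centerMass_mem (fun a _ => hc a) hpos fun a _ => hv a
      · rw [eval_smul_of_isHomogeneous S.isHomogeneous]
        exact mul_nonneg (by positivity) hx
  · filter_upwards [hcomb] with x hx hmem
    exact ⟨hx, (hpolar x).symm ▸ S.eval_nonneg hmem⟩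

theorem isSpectrahedralShadowCone_hypCone (S : IsNuijStage l e d 1 g) :
    IsSpectrahedralShadowCone (hypCone g e) := by
  let K : AddSubmonoid (Fin n → ℝ) :=
    { carrier := hypCone g e, add_mem' := S.add_mem, zero_mem' := S.zero_mem }
  obtain ⟨P, hP, hPK, hboundary⟩ := exists_isSpectrahedralShadowCone_subset (K := K)
    (T := {x | x ∈ hypCone g e ∧ eval x g = 0})
    (S.isClosed_hypCone.inter (isClosed_eq (continuous_eval g) continuous_const))
    (fun c hc x hx => ⟨S.smul_mem hx.1 hc, by
      rw [eval_smul_of_isHomogeneous S.isHomogeneous, hx.2, mul_zero]⟩)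
    fun u hu hu0 => by
      obtain ⟨P, hP, hPK, hnhds⟩ := S.exists_isSpectrahedralShadowCone_nhds hu.1 hu0 hu.2
      exact ⟨P, hP, hPK, hnhds.mono fun x hx hxT => hx hxT.1⟩
  convert hP.add (isSpectrahedralShadowCone_ray e)
  refine Set.Subset.antisymm (fun x hx => ?_) (Set.add_subset_iff.2 fun x hx y hy => ?_)
  · obtain ⟨b, hb, t, ht, rfl⟩ := S.exists_add_smul_eq S.degree_ne_zero hx
    exact Set.add_mem_add (hboundary hb) (Set.mem_image_of_mem _ ht)
  · obtain ⟨t, ht, rfl⟩ := hy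
    exact S.add_smul_mem (hPK hx) ht

end IsNuijStage

end ShadowOfNuijStage

section Sign

variable {n : ℕ} (h : MvPolynomial (Fin n) ℝ) (e a : Fin n → ℝ)

theorem linePoly_neg : linePoly (-h) a e = -linePoly h a e :=
  map_neg (aeval _) h

theorem isHyperbolic_neg_iff : IsHyperbolic (-h) e ↔ IsHyperbolic h e := by
  simp only [IsHyperbolic, RealRooted, linePoly_neg, map_neg, neg_eq_zero, ne_eq]

theorem hypCone_neg : hypCone (-h) e = hypCone h e := by
  simp only [hypCone, NonnegRealRooted, linePoly_neg, map_neg, neg_eq_zero]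

theorem multAt_neg : multAt (-h) a = multAt h a := by
  simp only [multAt, map_neg, neg_eq_zero, ne_eq]

theorem nuijSeq_neg (l : Fin n → ℝ) (d k : ℕ) : nuijSeq l e d (-h) k = -nuijSeq l e d h k := by
  rw [nuijSeq_eq_nuijStep_pow, map_neg, ← nuijSeq_eq_nuijStep_pow]

end Sign

section Limit

variable {n d : ℕ} {h : MvPolynomial (Fin n) ℝ} {l e : Fin n → ℝ}

theorem tendsto_coeff_nuijSeq (l e : Fin n → ℝ) (d : ℕ) (h : MvPolynomial (Fin n) ℝ)
    (m : Fin n →₀ ℕ) :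
    Filter.Tendsto (fun k => coeff m (nuijSeq l e d h k)) Filter.atTop (𝓝 (coeff m h)) := by
  have hcont := ((continuous_coeff_nuijStep_pow l e d h m).tendsto 0).comp
    tendsto_one_div_atTop_nhds_zero_nat
  rw [nuijStep_zero, one_pow, Module.End.one_apply] at hcont
  simpa only [nuijSeq_eq_nuijStep_pow, Function.comp_def] using hcont

theorem tendsto_eval_nuijSeq (l e : Fin n → ℝ) (d : ℕ) (h : MvPolynomial (Fin n) ℝ)
    {c : ℕ → Fin n → ℝ} {x : Fin n → ℝ} (hc : Filter.Tendsto c Filter.atTop (𝓝 x)) :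
    Filter.Tendsto (fun k => eval (c k) (nuijSeq l e d h k)) Filter.atTop (𝓝 (eval x h)) := by
  have hcont := ((continuous_eval_nuijStep_pow l e d h).tendsto (0, x)).comp
    (tendsto_one_div_atTop_nhds_zero_nat.prodMk_nhds hc)
  rw [nuijStep_zero, one_pow, Module.End.one_apply] at hcont
  simpa only [nuijSeq_eq_nuijStep_pow, Function.comp_def] using hcont

namespace IsHyperbolicForm

theorem isNuijStage_nuijSeq (H : IsHyperbolicForm d h e) (hd : d ≠ 0)
    (hl : ∀ a ∈ hypCone h e, a ≠ 0 → 0 < eval a (linearForm l)) {k : ℕ} (hk : 1 ≤ k) :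
    IsNuijStage l e d 1 (nuijSeq l e d h k) ∧
      hypCone h e ⊆ hypCone (nuijSeq l e d h k) e := by
  have S : IsNuijStage l e d (max 1 d) h := by
    rw [max_eq_right (Nat.one_le_iff_ne_zero.2 hd)]
    exact H.isNuijStage hd hl
  have hpow := S.nuijStep_pow (one_div_pos.2 (Nat.cast_pos.2 hk)) d
  rwa [Nat.sub_self, ← nuijSeq_eq_nuijStep_pow] at hpow

theorem isHyperbolicForm_nuijSeq (H : IsHyperbolicForm d h e)
    (hl : ∀ a ∈ hypCone h e, a ≠ 0 → 0 < eval a (linearForm l)) {k : ℕ} (hk : 1 ≤ k) :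
    IsHyperbolicForm d (nuijSeq l e d h k) e ∧
      hypCone h e ⊆ hypCone (nuijSeq l e d h k) e := by
  rcases eq_or_ne d 0 with rfl | hd
  · exact ⟨H, subset_rfl⟩
  · obtain ⟨S, hsub⟩ := H.isNuijStage_nuijSeq hd hl hk
    exact ⟨S.toIsHyperbolicForm, hsub⟩

theorem hypCone_eq_setOf_tendsto (H : IsHyperbolicForm d h e)
    (hl : ∀ a ∈ hypCone h e, a ≠ 0 → 0 < eval a (linearForm l)) :
    hypCone h e = {x : Fin n → ℝ | ∃ c : ℕ → Fin n → ℝ,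
      (∀ k ≥ 1, c k ∈ hypCone (nuijSeq l e d h k) e) ∧
      Filter.Tendsto c Filter.atTop (𝓝 x)} := by
  ext x
  refine ⟨fun hx => ⟨fun _ => x, fun k hk => (H.isHyperbolicForm_nuijSeq hl hk).2 hx,
    tendsto_const_nhds⟩, ?_⟩
  rintro ⟨c, hc, hcx⟩
  refine H.mem_hypCone_iff.2 fun t ht => (mul_pos H.eval_pos (pow_pos ht d)).trans_le ?_
  refine le_of_tendsto_of_tendsto ((tendsto_eval_nuijSeq l e d h tendsto_const_nhds).mul_const _)
    (tendsto_eval_nuijSeq l e d h (hcx.add_const (t • e))) ?_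
  filter_upwards [Filter.eventually_ge_atTop 1] with k hk
  exact (H.isHyperbolicForm_nuijSeq hl hk).1.mul_pow_le_eval (hc k hk) ht.le

theorem hypCone_eq_univ (H : IsHyperbolicForm 0 h e) : hypCone h e = Set.univ := by
  refine Set.eq_univ_of_forall fun a => by_contra fun ha => ?_
  obtain ⟨t, -, hroot⟩ := H.exists_pos_root_of_notMem ha
  rw [Polynomial.eq_C_of_natDegree_eq_zero (H.natDegree_linePoly a), Polynomial.eval_C] at hroot
  have hlead := H.leadingCoeff_linePoly a
  rw [Polynomial.leadingCoeff, H.natDegree_linePoly, hroot] at hlead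
  exact H.eval_pos.ne hlead

theorem subsingleton_of_pointedSet (H : IsHyperbolicForm 0 h e) (hpt : PointedSet (hypCone h e)) :
    Subsingleton (Fin n → ℝ) :=
  subsingleton_of_forall_eq 0 fun v => by_contra fun hv =>
    hpt ⟨0, v, hv, fun _ => H.hypCone_eq_univ ▸ Set.mem_univ _⟩

end IsHyperbolicForm

theorem IsNuijStage.multAt_eq_one (S : IsNuijStage l e d 1 h) {a : Fin n → ℝ}
    (ha : a ∈ frontier (hypCone h e)) (ha0 : a ≠ 0) : multAt h a = 1 := by
  obtain ⟨hmem, h0⟩ := S.mem_and_eval_eq_zero_of_mem_frontier ha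
  exact _root_.multAt_eq_one h0 (S.eval_dirDeriv_pos hmem ha0 h0).ne'

end Limit

/-- Let `h` be homogeneous of degree `d`, hyperbolic with respect to `e`,
with pointed hyperbolicity cone, and let `ℓ` be a linear form strictly positive on
`Λ_e(h) \ {0}`. Then for all sufficiently large `k` the polynomials
`h_k = (id + (1/k)·ℓ·∂_e)^d h` are hyperbolic with respect to `e` and every non-zero
boundary point of `Λ_e(h_k)` is a smooth point of `h_k`; moreover `h_k → h`
coefficientwise, and `Λ_e(h)` is the limit of the sequence of spectrahedral shadows
`Λ_e(h_k)`. -/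
theorem hyperbolicity_cone_limit_of_spectrahedral_shadows
    {n d : ℕ} (h : MvPolynomial (Fin n) ℝ) (e : Fin n → ℝ)
    (hhom : h.IsHomogeneous d) (hhyp : IsHyperbolic h e)
    (hpt : PointedSet (hypCone h e))
    (l : Fin n → ℝ) (hl : ∀ a ∈ hypCone h e, a ≠ 0 → 0 < ∑ i, l i * a i) :
    ∃ K : ℕ,
      (∀ k ≥ K,
        IsHyperbolic (nuijSeq l e d h k) e ∧
        (∀ a ∈ frontier (hypCone (nuijSeq l e d h k) e), a ≠ 0 →
          multAt (nuijSeq l e d h k) a = 1) ∧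
        IsSpectrahedralShadowCone (hypCone (nuijSeq l e d h k) e)) ∧
      (∀ mo : Fin n →₀ ℕ,
        Filter.Tendsto (fun k => MvPolynomial.coeff mo (nuijSeq l e d h k))
          Filter.atTop (nhds (MvPolynomial.coeff mo h))) ∧
      hypCone h e = {x : Fin n → ℝ | ∃ c : ℕ → Fin n → ℝ,
        (∀ k ≥ K, c k ∈ hypCone (nuijSeq l e d h k) e) ∧
        Filter.Tendsto c Filter.atTop (nhds x)} := by
  wlog hpos : 0 < eval e h generalizing h
  · have hneg : 0 < eval e (-h) := by
      rw [map_neg]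
      exact neg_pos.2 (lt_of_le_of_ne (not_lt.1 hpos) hhyp.1)
    simpa only [nuijSeq_neg, hypCone_neg, isHyperbolic_neg_iff, multAt_neg, coeff_neg,
      tendsto_neg_iff] using this (-h) hhom.neg ((isHyperbolic_neg_iff h e).2 hhyp)
        (hypCone_neg h e ▸ hpt) (hypCone_neg h e ▸ hl) hneg
  have H := hhyp.isHyperbolicForm hhom hpos
  have hl' : ∀ a ∈ hypCone h e, a ≠ 0 → 0 < eval a (linearForm l) := by
    simpa only [eval_linearForm] using hl
  refine ⟨1, fun k hk => ?_, tendsto_coeff_nuijSeq l e d h, H.hypCone_eq_setOf_tendsto hl'⟩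
  rcases eq_or_ne d 0 with rfl | hd
  · have := H.subsingleton_of_pointedSet hpt
    refine ⟨hhyp, fun a _ ha0 => (ha0 (Subsingleton.elim a 0)).elim, ?_⟩
    convert isSpectrahedralShadowCone_zero
    exact Set.subsingleton_of_subsingleton.eq_singleton_of_mem H.zero_mem
  · have S := (H.isNuijStage_nuijSeq hd hl' hk).1
    exact ⟨S.isHyperbolic, fun a => S.multAt_eq_one, S.isSpectrahedralShadowCone_hypCone⟩
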